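/- arXiv:1810.08932 — 15 statements merged into one kernel-verified Lean document; each statement's English description precedes it below -/
import Mathlib

section
/- Let (v_t)_{t=1,…,n} be a family of n < 16 nonzero, pairwise orthogonal A:B:C:D product vectors in the 4-qubit space V. Then there exists a nonzero ABC:D product vector orthogonal to every v_t. In particular, no 4-qubit orthogonal product family of size less than 16 (hence no 4-qubit UPB, all of which have size at most 12) remains a UPB in the coarse graining ℂ⁸⊗ℂ². -/
/-- The 4-qubit index type. -/
abbrev Q4 : Type := Fin 2 × Fin 2 × Fin 2 × Fin 2

/-- The standard inner product on the 4-qubit space `Q4 → ℂ`. -/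
noncomputable def ip (v w : Q4 → ℂ) : ℂ := ∑ x, (starRingEnd ℂ) (v x) * w x

/-- `v` is an `A:B:C:D` product vector. -/
def IsProdABCD (v : Q4 → ℂ) : Prop :=
  ∃ a b c d : Fin 2 → ℂ, v = fun p => a p.1 * b p.2.1 * c p.2.2.1 * d p.2.2.2

/-- The 3-qubit index type. -/
abbrev Q3 : Type := Fin 2 × Fin 2 × Fin 2

/-- Standard inner product on a finite coordinate space. -/
noncomputable def hip {ι : Type} [Fintype ι] (v w : ι → ℂ) : ℂ :=
  ∑ x, (starRingEnd ℂ) (v x) * w x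

/-- Pure tensor of a 3-qubit vector and a qubit vector. -/
noncomputable def tens (u : Q3 → ℂ) (w : Fin 2 → ℂ) : Q4 → ℂ :=
  fun p => u (p.1, p.2.1, p.2.2.1) * w p.2.2.2

theorem ip_tens_left (x : Q3 → ℂ) (d : Fin 2 → ℂ) (z : Q4 → ℂ) :
    ip (tens x d) z =
      ∑ l, (starRingEnd ℂ) (d l) * hip x (fun i => z (i.1, i.2.1, i.2.2, l)) := by
  simp only [ip, hip, tens, Fintype.sum_prod_type, Fin.sum_univ_two, map_mul]
  ring

theorem ip_tens (x u : Q3 → ℂ) (d w : Fin 2 → ℂ) :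
    ip (tens x d) (tens u w) = hip x u * hip d w := by
  simp only [ip, hip, tens, Fintype.sum_prod_type, Fin.sum_univ_two, map_mul]
  ring

theorem hip_conj {ι : Type} [Fintype ι] (v w : ι → ℂ) :
    (starRingEnd ℂ) (hip v w) = hip w v := by
  simp [hip, map_sum, mul_comm]

theorem hip_sub_right {ι : Type} [Fintype ι] (v w y : ι → ℂ) :
    hip v (w - y) = hip v w - hip v y := by
  simp [hip, mul_sub]

theorem hip_span {ι : Type} [Fintype ι] (v : ι → ℂ) (S : Set (ι → ℂ))
    (h : ∀ s ∈ S, hip v s = 0) (y : ι → ℂ) (hy : y ∈ Submodule.span ℂ S) :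
    hip v y = 0 := by
  induction hy using Submodule.span_induction with
  | mem x hx => exact h x hx
  | zero => simp [hip]
  | add x y _ _ hx hy =>
    have : hip v (x + y) = hip v x + hip v y := by
      simp [hip, mul_add, Finset.sum_add_distrib]
    rw [this, hx, hy, add_zero]
  | smul c x _ hx =>
    have : hip v (c • x) = c * hip v x := by
      simp only [hip, Finset.mul_sum, Pi.smul_apply, smul_eq_mul]
      exact Finset.sum_congr rfl fun i _ => by ring
    rw [this, hx, mul_zero]

/-- Orthogonal projection onto a subspace, in coordinates. -/
theorem exists_proj {ι : Type} [Fintype ι] (X : Submodule ℂ (ι → ℂ)) (x : ι → ℂ) :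
    ∃ y ∈ X, ∀ m ∈ X, hip m (x - y) = 0 := by
  let e := (WithLp.linearEquiv 2 ℂ (ι → ℂ))
  let K : Submodule ℂ (EuclideanSpace ℂ ι) := X.comap e.toLinearMap
  let x' : EuclideanSpace ℂ ι := WithLp.toLp 2 x
  refine ⟨e (K.starProjection x'), K.starProjection_apply_mem x', fun m hm => ?_⟩
  have h := K.starProjection_inner_eq_zero x' (WithLp.toLp 2 m) hm
  rw [← inner_conj_symm, map_eq_zero] at h
  rw [← h]
  simp [PiLp.inner_apply, hip, e, x', mul_comm]

/-- The rotated vector orthogonal to `d`. -/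
noncomputable def rot (d : Fin 2 → ℂ) : Fin 2 → ℂ :=
  ![-(starRingEnd ℂ) (d 1), (starRingEnd ℂ) (d 0)]

theorem hip_rot (d : Fin 2 → ℂ) : hip d (rot d) = 0 := by
  simp [hip, rot, Fin.sum_univ_two]; ring

theorem vec2_ne (d : Fin 2 → ℂ) (hd : d ≠ 0) : d 0 ≠ 0 ∨ d 1 ≠ 0 := by
  by_contra! h
  exact hd (by ext i; fin_cases i <;> simp [h])

theorem rot_ne (d : Fin 2 → ℂ) (hd : d ≠ 0) : rot d ≠ 0 := by
  intro h
  have h0 := congrFun h 0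
  have h1 := congrFun h 1
  simp [rot] at h0 h1
  rcases vec2_ne d hd with h | h <;> contradiction

theorem eq_smul_rot (d q : Fin 2 → ℂ) (hd : d ≠ 0) (h : hip q d = 0) :
    ∃ c : ℂ, q = c • rot d := by
  have h' : q 0 * (starRingEnd ℂ) (d 0) + q 1 * (starRingEnd ℂ) (d 1) = 0 := by
    have := congrArg (starRingEnd ℂ) h
    simpa [hip, Fin.sum_univ_two] using this
  rcases vec2_ne d hd with h0 | h1
  · have h0' : (starRingEnd ℂ) (d 0) ≠ 0 := by simpa using h0
    refine ⟨q 1 / (starRingEnd ℂ) (d 0), ?_⟩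
    ext i; fin_cases i
    · simp [rot]; field_simp; linear_combination h'
    · simp [rot]; field_simp
  · have h1' : (starRingEnd ℂ) (d 1) ≠ 0 := by simpa using h1
    refine ⟨-q 0 / (starRingEnd ℂ) (d 1), ?_⟩
    ext i; fin_cases i
    · simp [rot]; field_simp
    · simp [rot]; field_simp; linear_combination h'

theorem hip_smul_right {ι : Type} [Fintype ι] (v w : ι → ℂ) (c : ℂ) :
    hip v (c • w) = c * hip v w := by
  simp only [hip, Finset.mul_sum, Pi.smul_apply, smul_eq_mul]
  exact Finset.sum_congr rfl fun i _ => by ring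

/-- A vector orthogonal to both `d` and `rot d` vanishes. -/
theorem eq_zero_of_hip (d f : Fin 2 → ℂ) (hd : d ≠ 0) (h1 : hip d f = 0)
    (h2 : hip (rot d) f = 0) : f = 0 := by
  obtain ⟨c, rfl⟩ := eq_smul_rot d f hd (by rw [← hip_conj, h1, map_zero])
  rw [hip_smul_right] at h2
  rcases mul_eq_zero.1 h2 with h | h
  · simp [h]
  · exfalso
    apply rot_ne d hd
    simp only [hip] at h
    have h' : ((∑ i, Complex.normSq (rot d i) : ℝ) : ℂ) = 0 := by
      rw [← h]; push_cast
      exact Finset.sum_congr rfl fun i _ => by rw [Complex.normSq_eq_conj_mul_self]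
    have h'' : ∑ i, Complex.normSq (rot d i) = 0 := by exact_mod_cast h'
    rw [Finset.sum_eq_zero_iff_of_nonneg fun i _ => Complex.normSq_nonneg _] at h''
    ext i
    exact Complex.normSq_eq_zero.1 (h'' i (Finset.mem_univ i))

theorem tens_ne (u : Q3 → ℂ) (w : Fin 2 → ℂ) (hu : u ≠ 0) (hw : w ≠ 0) : tens u w ≠ 0 := by
  obtain ⟨i, hi⟩ := Function.ne_iff.1 hu
  obtain ⟨l, hl⟩ := Function.ne_iff.1 hw
  intro h
  have := congrFun h (i.1, i.2.1, i.2.2, l)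
  exact mul_ne_zero hi hl this

theorem exists_orth (n : ℕ) (hn : n < 16) (v : Fin n → Q4 → ℂ) :
    ∃ z : Q4 → ℂ, z ≠ 0 ∧ ∀ t, ip (v t) z = 0 := by
  let L : (Q4 → ℂ) →ₗ[ℂ] (Fin n → ℂ) :=
    { toFun := fun z t => ip (v t) z
      map_add' := fun a b => by
        ext t; simp [ip, mul_add, Finset.sum_add_distrib]
      map_smul' := fun c a => by
        ext t
        exact hip_smul_right (v t) a c }
  have hk : LinearMap.ker L ≠ ⊥ := by
    apply LinearMap.ker_ne_bot_of_finrank_lt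
    simpa using hn
  obtain ⟨z, hz, hz0⟩ := Submodule.exists_mem_ne_zero_of_ne_bot hk
  exact ⟨z, hz0, fun t => congrFun (LinearMap.mem_ker.1 hz) t⟩

theorem main_tens (n : ℕ) (hn : n < 16) (x : Fin n → Q3 → ℂ) (d : Fin n → Fin 2 → ℂ)
    (hd : ∀ t, d t ≠ 0)
    (horth : ∀ s t, s ≠ t → hip (x s) (x t) * hip (d s) (d t) = 0) :
    ∃ (u : Q3 → ℂ) (w : Fin 2 → ℂ), u ≠ 0 ∧ w ≠ 0 ∧ ∀ t, hip (x t) u * hip (d t) w = 0 := by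
  obtain ⟨z, hz0, hz⟩ := exists_orth n hn fun t => tens (x t) (d t)
  by_cases hall : ∀ t l, hip (x t) (fun i => z (i.1, i.2.1, i.2.2, l)) = 0
  · obtain ⟨p, hp⟩ := Function.ne_iff.1 hz0
    refine ⟨fun i => z (i.1, i.2.1, i.2.2, p.2.2.2), fun _ => 1, ?_, ?_, fun t => ?_⟩
    · intro h
      exact hp (congrFun h (p.1, p.2.1, p.2.2.1))
    · intro h
      exact one_ne_zero (congrFun h 0)
    · rw [hall t, zero_mul]
  push Not at hall
  obtain ⟨t0, l0, h0⟩ := hall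
  let S : Set (Q3 → ℂ) := {y | ∃ t, hip (d t) (d t0) = 0 ∧ x t = y}
  obtain ⟨y, hy, hproj⟩ := exists_proj (Submodule.span ℂ S) (x t0)
  refine ⟨x t0 - y, rot (d t0), ?_, rot_ne _ (hd t0), fun s => ?_⟩
  · intro h
    have hxy : x t0 = y := sub_eq_zero.1 h
    rw [← hxy] at hy
    -- the functional attached to `rot (d t0)` kills `x t0`
    let g : Q3 → ℂ := fun i => ∑ l, (starRingEnd ℂ) (rot (d t0) l) * z (i.1, i.2.1, i.2.2, l)
    let f : Fin 2 → ℂ := fun l => hip (x t0) (fun i => z (i.1, i.2.1, i.2.2, l))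
    have hg : ∀ a, hip a g = ip (tens a (rot (d t0))) z := by
      intro a
      rw [ip_tens_left]
      simp only [hip, g, Finset.mul_sum]
      rw [Finset.sum_comm]
      exact Finset.sum_congr rfl fun i _ => Finset.sum_congr rfl fun l _ => by ring
    have hgx : hip g (x t0) = 0 := by
      refine hip_span g S ?_ _ hy
      rintro _ ⟨t, ht, rfl⟩
      obtain ⟨c, hc⟩ := eq_smul_rot (d t0) (d t) (hd t0) ht
      have hc0 : c ≠ 0 := by
        rintro rfl
        exact hd t (by simpa using hc)
      have h2 := hz t
      rw [ip_tens_left, hc] at h2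
      rw [← hip_conj, hg, ip_tens_left, map_eq_zero]
      simp only [Pi.smul_apply, smul_eq_mul, map_mul, mul_assoc] at h2
      rw [← Finset.mul_sum] at h2
      exact (mul_eq_zero.1 h2).resolve_left (by simpa using hc0)
    have hf : f = 0 := by
      refine eq_zero_of_hip (d t0) f (hd t0) ?_ ?_
      · have := hz t0
        rwa [ip_tens_left] at this
      · have h3 : hip (x t0) g = 0 := by rw [← hip_conj, hgx, map_zero]
        rwa [hg, ip_tens_left] at h3
    exact h0 (congrFun hf l0)
  · by_cases hs : hip (d s) (rot (d t0)) = 0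
    · rw [hs, mul_zero]
    by_cases hs' : hip (d s) (d t0) = 0
    · rw [hproj _ (Submodule.subset_span ⟨s, hs', rfl⟩), zero_mul]
    have hst : s ≠ t0 := by
      rintro rfl
      exact hs (hip_rot _)
    have h1 : hip (x s) (x t0) = 0 := (mul_eq_zero.1 (horth s t0 hst)).resolve_right hs'
    have h2 : hip (x s) y = 0 := by
      refine hip_span _ S ?_ _ hy
      rintro _ ⟨t, ht, rfl⟩
      have hst' : s ≠ t := by
        rintro rfl
        exact hs' ht
      refine (mul_eq_zero.1 (horth s t hst')).resolve_right ?_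
      obtain ⟨c, hc⟩ := eq_smul_rot (d t0) (d t) (hd t0) ht
      have hc0 : c ≠ 0 := by
        rintro rfl
        exact hd t (by simpa using hc)
      rw [hc, hip_smul_right]
      exact mul_ne_zero hc0 hs
    rw [hip_sub_right, h1, h2, sub_zero, zero_mul]

/-- Any family of fewer than `16` nonzero pairwise orthogonal 4-qubit product
vectors admits a nonzero `ABC:D` product vector orthogonal to all of them;
in particular no 4-qubit UPB remains a UPB in the coarse graining `ℂ⁸ ⊗ ℂ²`. -/
theorem stmt2 (n : ℕ) (hn : n < 16) (v : Fin n → Q4 → ℂ)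
    (hprod : ∀ t, IsProdABCD (v t)) (hnz : ∀ t, v t ≠ 0)
    (horth : ∀ s t, s ≠ t → ip (v s) (v t) = 0) :
    ∃ (u : Fin 2 × Fin 2 × Fin 2 → ℂ) (w : Fin 2 → ℂ),
      (fun p : Q4 => u (p.1, p.2.1, p.2.2.1) * w p.2.2.2) ≠ 0 ∧
      ∀ t, ip (v t) (fun p : Q4 => u (p.1, p.2.1, p.2.2.1) * w p.2.2.2) = 0 := by
  choose a b c d hv using hprod
  let x : Fin n → Q3 → ℂ := fun t i => a t i.1 * b t i.2.1 * c t i.2.2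
  have hx : ∀ t, v t = tens (x t) (d t) := hv
  obtain ⟨u, w, hu, hw, h⟩ := main_tens n hn x d
    (fun t h0 => hnz t (by rw [hx, h0]; ext p; simp [tens]))
    (fun s t hst => by
      have := horth s t hst
      rwa [hx, hx, ip_tens] at this)
  refine ⟨u, w, tens_ne u w hu hw, fun t => ?_⟩
  have := h t
  rw [← ip_tens, ← hx] at this
  exact this
end

section
/- Let v_j = |f_j, g_j, h_j, i_j⟩, j = 1,…,n (n ≥ 4), be 4-qubit product vectors with all f_j, g_j, h_j, i_j : Fin 2 → ℂ nonzero, and let m be an integer with 0 ≤ m ≤ n−4. Suppose (i) there is an integer k with 1 ≤ k ≤ n−3−m such that f_1 = f_2 = … = f_k and g_{k+1} = … = g_{n−3−m}, and (ii) there is a subset J ⊆ {n−2−m, …, n} of cardinality m+1 such that the vectors (k,l) ↦ h_j k · i_j l for j ∈ J are pairwise linearly dependent. Then there exists a nonzero A:B:CD product vector orthogonal to every v_j; in particular the family is not a UPB for the A:B:CD grouping. -/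
/-- The 4-qubit product vector `|x,y,z,w⟩`. -/
def pv (x y z w : Fin 2 → ℂ) : Q4 → ℂ := fun p => x p.1 * y p.2.1 * z p.2.2.1 * w p.2.2.2

/-- Fewer than `card ι` vectors have a common nonzero orthogonal vector. -/
lemma exists_orth_s3 {ι : Type} [Fintype ι] (d : ℕ) (hd : d < Fintype.card ι) (u : Fin d → ι → ℂ) :
    ∃ w : ι → ℂ, w ≠ 0 ∧ ∀ k, ∑ x, (starRingEnd ℂ) (u k x) * w x = 0 := by
  let M : Matrix (Fin d) ι ℂ := fun k x => (starRingEnd ℂ) (u k x)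
  have hk : LinearMap.ker M.mulVecLin ≠ ⊥ := by
    apply LinearMap.ker_ne_bot_of_finrank_lt
    simpa using hd
  obtain ⟨w, hw, hw0⟩ := Submodule.exists_mem_ne_zero_of_ne_bot hk
  refine ⟨w, hw0, fun k => ?_⟩
  have := congrFun (LinearMap.mem_ker.mp hw) k
  exact this

/-- The inner product of product vectors factors. -/
lemma ip_factor (x y z t a b : Fin 2 → ℂ) (w : Fin 2 × Fin 2 → ℂ) :
    ip (pv x y z t) (fun p : Q4 => a p.1 * b p.2.1 * w (p.2.2.1, p.2.2.2)) =
      (∑ r, (starRingEnd ℂ) (x r) * a r) * (∑ r, (starRingEnd ℂ) (y r) * b r) *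
        ∑ p : Fin 2 × Fin 2, (starRingEnd ℂ) (z p.1 * t p.2) * w p := by
  simp only [ip, pv, Fintype.sum_prod_type, Fin.sum_univ_two, map_mul]
  ring

/-- Lemma `le:n-3of2*2*4` of the paper: under conditions (i) and (ii) the family
`v_j = |f_j, g_j, h_j, i_j⟩`, `j = 1, …, n`, is not a UPB for the `A:B:CD` grouping:
there is a nonzero `A:B:CD` product vector orthogonal to every `v_j`. -/
theorem stmt3 (n m : ℕ) (hn : 4 ≤ n) (hm : m + 4 ≤ n)
    (f g h i : ℕ → Fin 2 → ℂ)
    (hnz : ∀ j ∈ Finset.Icc 1 n, f j ≠ 0 ∧ g j ≠ 0 ∧ h j ≠ 0 ∧ i j ≠ 0)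
    -- condition (i)
    (hi : ∃ k, 1 ≤ k ∧ k ≤ n - 3 - m ∧
      (∀ j, 1 ≤ j → j ≤ k → f j = f 1) ∧
      (∀ j, k + 1 ≤ j → j ≤ n - 3 - m → g j = g (k + 1)))
    -- condition (ii): `m+1` pairwise linearly dependent CD-parts among the last `m+3`
    (hii : ∃ J : Finset ℕ, J ⊆ Finset.Icc (n - 2 - m) n ∧ J.card = m + 1 ∧
      ∀ j ∈ J, ∀ j' ∈ J, ∃ μ : ℂ,
        (fun p : Fin 2 × Fin 2 => h j p.1 * i j p.2) =
          μ • fun p : Fin 2 × Fin 2 => h j' p.1 * i j' p.2) :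
    ∃ (a b : Fin 2 → ℂ) (w : Fin 2 × Fin 2 → ℂ),
      (fun p : Q4 => a p.1 * b p.2.1 * w (p.2.2.1, p.2.2.2)) ≠ 0 ∧
      ∀ j ∈ Finset.Icc 1 n,
        ip (pv (f j) (g j) (h j) (i j))
          (fun p : Q4 => a p.1 * b p.2.1 * w (p.2.2.1, p.2.2.2)) = 0 := by
  obtain ⟨k, hk1, hk2, hf, hg⟩ := hi
  obtain ⟨J, hJ, hJc, hdep⟩ := hii
  obtain ⟨a, ha, ha'⟩ := exists_orth_s3 (ι := Fin 2) 1 (by simp) (fun _ => f 1)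
  obtain ⟨b, hb, hb'⟩ := exists_orth_s3 (ι := Fin 2) 1 (by simp) (fun _ => g (k + 1))
  have hS : (Finset.Icc (n - 2 - m) n \ J).card = 2 := by
    rw [Finset.card_sdiff_of_subset hJ, hJc, Nat.card_Icc]
    omega
  obtain ⟨p, q, -, hpq⟩ := Finset.card_eq_two.mp hS
  obtain ⟨j₀, hj₀⟩ : J.Nonempty := by
    rw [← Finset.card_pos]
    omega
  obtain ⟨w, hw, hw'⟩ := exists_orth_s3 (ι := Fin 2 × Fin 2) 3 (by simp)
    (fun r s => h (![p, q, j₀] r) s.1 * i (![p, q, j₀] r) s.2)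
  refine ⟨a, b, w, ?_, ?_⟩
  · obtain ⟨r, hr⟩ := Function.ne_iff.mp ha
    obtain ⟨s, hs⟩ := Function.ne_iff.mp hb
    obtain ⟨t, ht⟩ := Function.ne_iff.mp hw
    exact Function.ne_iff.mpr ⟨(r, s, t.1, t.2), mul_ne_zero (mul_ne_zero hr hs) ht⟩
  · intro j hj
    rw [Finset.mem_Icc] at hj
    rw [ip_factor]
    by_cases h1 : j ≤ k
    · rw [hf j hj.1 h1, ha' 0]
      simp
    by_cases h2 : j ≤ n - 3 - m
    · rw [hg j (by omega) h2, hb' 0]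
      simp
    apply mul_eq_zero_of_right
    by_cases h3 : j ∈ J
    · obtain ⟨c, hc⟩ := hdep j h3 j₀ hj₀
      have hc' : ∀ s : Fin 2 × Fin 2, h j s.1 * i j s.2 = c * (h j₀ s.1 * i j₀ s.2) :=
        fun s => congrFun hc s
      have h0 := hw' 2
      simp only [Matrix.cons_val] at h0
      simp only [hc', (starRingEnd ℂ).map_mul c, mul_assoc ((starRingEnd ℂ) c), ← Finset.mul_sum]
      rw [h0, mul_zero]
    · have h4 : j ∈ Finset.Icc (n - 2 - m) n \ J := by
        rw [Finset.mem_sdiff, Finset.mem_Icc]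
        exact ⟨⟨by omega, hj.2⟩, h3⟩
      rw [hpq, Finset.mem_insert, Finset.mem_singleton] at h4
      rcases h4 with rfl | rfl
      · exact hw' 0
      · exact hw' 1
end

section
/- For all α, β ∈ (0, π/2) with α ≠ β, the family S₆, regarded under the AB:C:D grouping, is a UPB: every AB:C:D product vector (i.e., every v with v (i,j,k,l) = u (i,j) · c k · d l for some u : Fin 2 × Fin 2 → ℂ and c,d : Fin 2 → ℂ) orthogonal to all six members of S₆ is the zero vector. -/
/-- `|0⟩`. -/
def ket0 : Fin 2 → ℂ := ![1, 0]

/-- `|1⟩`. -/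
def ket1 : Fin 2 → ℂ := ![0, 1]

/-- `(cos t, sin t)` as a qubit state. -/
noncomputable def vk (t : ℝ) : Fin 2 → ℂ := ![(Real.cos t : ℂ), (Real.sin t : ℂ)]

/-- `(sin t, −cos t)` as a qubit state, orthogonal to `vk t`. -/
noncomputable def vk' (t : ℝ) : Fin 2 → ℂ := ![(Real.sin t : ℂ), -(Real.cos t : ℂ)]

/-- The unique 4-qubit UPB of size 6:
`{|0,0,0,0⟩, |0,a,a,1⟩, |1,0,b,a⟩, |1,a,b',b⟩, |a,1,a',b'⟩, |a',a',1,a'⟩}`. -/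
noncomputable def S6 (α β : ℝ) : Fin 6 → Q4 → ℂ :=
  ![pv ket0 ket0 ket0 ket0,
    pv ket0 (vk α) (vk α) ket1,
    pv ket1 ket0 (vk β) (vk α),
    pv ket1 (vk α) (vk' β) (vk β),
    pv (vk α) ket1 (vk' α) (vk' β),
    pv (vk' α) (vk' α) ket1 (vk' α)]

lemma cancel_two {x y z : ℂ} (hy : y ≠ 0) (hz : z ≠ 0) (h : x * y * z = 0) : x = 0 :=
  (mul_eq_zero.mp ((mul_eq_zero.mp h).resolve_right hz)).resolve_right hy

/-- Two nonparallel covectors cannot both kill a nonzero vector. -/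
lemma two_kill {p q p' q' x y : ℂ} (h : p * q' - q * p' ≠ 0)
    (h1 : p * x + q * y = 0) (h2 : p' * x + q' * y = 0) : x = 0 ∧ y = 0 := by
  constructor
  · apply (mul_eq_zero.mp (_ : (p * q' - q * p') * x = 0)).resolve_left h
    linear_combination q' * h1 - q * h2
  · apply (mul_eq_zero.mp (_ : (p * q' - q * p') * y = 0)).resolve_left h
    linear_combination p * h2 - p' * h1

/-- Among pairwise nonparallel covectors at most one kills a given nonzero vector. -/
lemma at_most_one (P Q : Fin 6 → ℂ) (h : ∀ i j, i < j → P i * Q j - Q i * P j ≠ 0) (x y : ℂ)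
    (hxy : ¬ (x = 0 ∧ y = 0)) : ∃ i, ∀ j, j ≠ i → P j * x + Q j * y ≠ 0 := by
  by_cases hex : ∃ i, P i * x + Q i * y = 0
  · obtain ⟨i, hi⟩ := hex
    refine ⟨i, fun j hj hj0 => hxy ?_⟩
    rcases lt_or_gt_of_ne hj with hlt | hlt
    · exact two_kill (h _ _ hlt) hj0 hi
    · exact two_kill (h _ _ hlt) hi hj0
  · exact ⟨0, fun j _ hj => hex ⟨j, hj⟩⟩

/-- Any four of the six AB vectors are linearly independent. -/
lemma four_indep (C S p q r t : ℂ) (hC : C ≠ 0) (hS : S ≠ 0) (h1 : C ^ 2 + S ^ 2 = 1)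
    (hD1 : C ^ 4 + S ^ 2 ≠ 0) (hD2 : 1 + S ^ 2 ≠ 0) (i j : Fin 6)
    (h : ∀ k, k ≠ i → k ≠ j → (![p, C * p + S * q, r, C * r + S * t, C * q + S * t,
      S * (S * p - C * q) - C * (S * r - C * t)] : Fin 6 → ℂ) k = 0) :
    p = 0 ∧ q = 0 ∧ r = 0 ∧ t = 0 := by
  have e0 := h 0
  have e1 := h 1
  have e2 := h 2
  have e3 := h 3
  have e4 := h 4
  have e5 := h 5
  clear h
  fin_cases i <;> fin_cases j <;> simp at e0 e1 e2 e3 e4 e5 <;> grind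

/-- The size-6 family `S₆` is a UPB for the `AB:C:D` grouping: any `AB:C:D` product
vector orthogonal to all six members is zero. -/
theorem stmt4 (α β : ℝ) (hα : α ∈ Set.Ioo 0 (Real.pi / 2))
    (hβ : β ∈ Set.Ioo 0 (Real.pi / 2)) (hαβ : α ≠ β)
    (u : Fin 2 × Fin 2 → ℂ) (c d : Fin 2 → ℂ)
    (horth : ∀ t, ip (S6 α β t) (fun p : Q4 => u (p.1, p.2.1) * c p.2.2.1 * d p.2.2.2) = 0) :
    (fun p : Q4 => u (p.1, p.2.1) * c p.2.2.1 * d p.2.2.2) = 0 := by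
  obtain ⟨ha0, ha1⟩ := hα
  obtain ⟨hb0, hb1⟩ := hβ
  have hpi := Real.pi_pos
  have hC : 0 < Real.cos α := Real.cos_pos_of_mem_Ioo ⟨by linarith, ha1⟩
  have hS : 0 < Real.sin α := Real.sin_pos_of_pos_of_lt_pi ha0 (by linarith)
  have hC' : 0 < Real.cos β := Real.cos_pos_of_mem_Ioo ⟨by linarith, hb1⟩
  have hS' : 0 < Real.sin β := Real.sin_pos_of_pos_of_lt_pi hb0 (by linarith)
  have hsub : Real.cos α * Real.sin β - Real.sin α * Real.cos β ≠ 0 := by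
    intro h
    have h2 : Real.sin (β - α) = 0 := by rw [Real.sin_sub]; linarith
    rw [Real.sin_eq_zero_iff_of_lt_of_lt (by linarith) (by linarith)] at h2
    exact hαβ (by linarith)
  have h1 := Real.cos_sq_add_sin_sq α
  have h1' := Real.cos_sq_add_sin_sq β
  have o0 := horth 0
  have o1 := horth 1
  have o2 := horth 2
  have o3 := horth 3
  have o4 := horth 4
  have o5 := horth 5
  clear horth
  simp [ip, S6, pv, ket0, ket1, vk, vk', Fintype.sum_prod_type, -Complex.ofReal_cos,
    -Complex.ofReal_sin, Complex.conj_ofReal] at o0 o1 o2 o3 o4 o5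
  generalize Real.cos α = C at *
  generalize Real.sin α = S at *
  generalize Real.cos β = C' at *
  generalize Real.sin β = S' at *
  by_cases hc : c 0 = 0 ∧ c 1 = 0
  · funext p
    have : c p.2.2.1 = 0 := by
      generalize p.2.2.1 = k
      fin_cases k
      exacts [hc.1, hc.2]
    simp [this]
  by_cases hd : d 0 = 0 ∧ d 1 = 0
  · funext p
    have : d p.2.2.2 = 0 := by
      generalize p.2.2.2 = k
      fin_cases k
      exacts [hd.1, hd.2]
    simp [this]
  have g : 0 < C * C' + S * S' := by positivity
  obtain ⟨i, hi⟩ := at_most_one (fun k => ((![1, C, C', S', S, 0] : Fin 6 → ℝ) k : ℂ))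
    (fun k => ((![0, S, S', -C', -C, 1] : Fin 6 → ℝ) k : ℂ)) (by
      intro i j hij
      norm_cast
      fin_cases i <;> fin_cases j <;> simp at hij ⊢ <;> grind) (c 0) (c 1) hc
  obtain ⟨j, hj⟩ := at_most_one (fun k => ((![1, 0, C, C', S', S] : Fin 6 → ℝ) k : ℂ))
    (fun k => ((![0, 1, S, S', -C', -C] : Fin 6 → ℝ) k : ℂ)) (by
      intro i j hij
      norm_cast
      fin_cases i <;> fin_cases j <;> simp at hij ⊢ <;> grind) (d 0) (d 1) hd
  have D1 : (C : ℂ) ^ 4 + (S : ℂ) ^ 2 ≠ 0 := by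
    norm_cast
    positivity
  have D2 : 1 + (S : ℂ) ^ 2 ≠ 0 := by
    norm_cast
    positivity
  obtain ⟨e1, e2, e3, e4⟩ := four_indep C S (u (0, 0)) (u (0, 1)) (u (1, 0)) (u (1, 1))
    (by exact_mod_cast hC.ne') (by exact_mod_cast hS.ne') (by exact_mod_cast h1) D1 D2 i j (by
      intro k hki hkj
      have n1 := hi k hki
      have n2 := hj k hkj
      refine cancel_two n1 n2 ?_
      clear hi hj n1 n2
      fin_cases k <;> simp [-mul_eq_zero]
      · simpa using o0
      · linear_combination o1
      · linear_combination o2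
      · linear_combination o3
      · linear_combination o4
      · linear_combination o5)
  funext p
  have : u (p.1, p.2.1) = 0 := by
    generalize p.1 = k
    generalize p.2.1 = l
    fin_cases k <;> fin_cases l
    exacts [e1, e2, e3, e4]
  simp [this]
end

section
/- For all α, β ∈ (0, π/2) with α ≠ β, the family S₆ is not a UPB for the A:B:CD grouping: there exists a nonzero ψ : Fin 2 × Fin 2 → ℂ such that the A:B:CD product vector (i,j,k,l) ↦ |1⟩ i · |1⟩ j · ψ (k,l) is nonzero and orthogonal to all six members of S₆. -/
/-- `S₆` is not a UPB for the `A:B:CD` grouping: there is a nonzero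
`|1⟩ ⊗ |1⟩ ⊗ ψ` orthogonal to all six members. -/
theorem stmt5 (α β : ℝ) (hα : α ∈ Set.Ioo 0 (Real.pi / 2))
    (hβ : β ∈ Set.Ioo 0 (Real.pi / 2)) (hαβ : α ≠ β) :
    ∃ ψ : Fin 2 × Fin 2 → ℂ, ψ ≠ 0 ∧
      (fun p : Q4 => ket1 p.1 * ket1 p.2.1 * ψ (p.2.2.1, p.2.2.2)) ≠ 0 ∧
      ∀ t, ip (S6 α β t) (fun p : Q4 => ket1 p.1 * ket1 p.2.1 * ψ (p.2.2.1, p.2.2.2)) = 0 := by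
  have hsa : Real.sin α ≠ 0 :=
    (Real.sin_pos_of_pos_of_lt_pi hα.1 (by linarith [hα.2, Real.pi_pos])).ne'
  have hsb : Real.sin β ≠ 0 :=
    (Real.sin_pos_of_pos_of_lt_pi hβ.1 (by linarith [hβ.2, Real.pi_pos])).ne'
  have h1 : (Real.cos β : ℂ) ^ 2 + (Real.sin β : ℂ) ^ 2 = 1 := by
    exact_mod_cast Real.cos_sq_add_sin_sq β
  have hca : Real.cos α ≠ 0 :=
    (Real.cos_pos_of_mem_Ioo ⟨by linarith [hα.1, Real.pi_pos], hα.2⟩).ne'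
  have hsa' : (Real.sin α : ℂ) ≠ 0 := by exact_mod_cast hsa
  have hsb' : (Real.sin β : ℂ) ≠ 0 := by exact_mod_cast hsb
  have hca' : (Real.cos α : ℂ) ≠ 0 := by exact_mod_cast hca
  have hc : ∀ t : ℝ, (starRingEnd ℂ) (t : ℂ) = t := Complex.conj_ofReal
  unfold S6 ip pv ket0 ket1 vk vk'
  generalize hA : (Real.cos α : ℂ) = ca at *
  generalize hB : (Real.sin α : ℂ) = sa at *
  generalize hC : (Real.cos β : ℂ) = cb at *
  generalize hD : (Real.sin β : ℂ) = sb at *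
  have e1 : (starRingEnd ℂ) ca = ca := by rw [← hA]; exact hc _
  have e2 : (starRingEnd ℂ) sa = sa := by rw [← hB]; exact hc _
  have e3 : (starRingEnd ℂ) cb = cb := by rw [← hC]; exact hc _
  have e4 : (starRingEnd ℂ) sb = sb := by rw [← hD]; exact hc _
  have hne : sa * sb * ca ≠ 0 := mul_ne_zero (mul_ne_zero hsa' hsb') hca'
  let P : ℂ := cb * sa * (cb * ca + sb * sa)
  let Q : ℂ := ca * sb * (sb * ca - cb * sa)
  refine ⟨fun x => ![![cb * P + sb * Q, sb * P - cb * Q],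
    ![sa * sb * ca, sa * sb * sa]] x.1 x.2, ?_, ?_, ?_⟩
  · intro h
    exact hne (by simpa using congrFun h (1, 0))
  · intro h
    exact hne (by simpa using congrFun h (1, 1, 1, 0))
  · intro t
    fin_cases t <;> simp [Fintype.sum_prod_type, e1, e2, e3, e4, P, Q] <;> try grind
end

section
/- For all α, β ∈ (0, π/2) with α ≠ β, the family S₆ is not a UPB for any of the groupings A:BC:D, A:BD:C, AC:B:D, AD:B:C. That is: there exist nonzero product vectors of each of the forms (i,j,k,l) ↦ a i · w (j,k) · d l, (i,j,k,l) ↦ a i · w (j,l) · c k, (i,j,k,l) ↦ w (i,k) · b j · d l, and (i,j,k,l) ↦ w (i,l) · b j · c k (with a,b,c,d : Fin 2 → ℂ and w : Fin 2 × Fin 2 → ℂ), each orthogonal to all six members of S₆. -/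
/-- `S₆` is not a UPB for any of the groupings `A:BC:D`, `A:BD:C`, `AC:B:D`, `AD:B:C`:
for each there is a nonzero product vector of the corresponding form orthogonal to
all six members. -/
theorem stmt6 (α β : ℝ) (hα : α ∈ Set.Ioo 0 (Real.pi / 2))
    (hβ : β ∈ Set.Ioo 0 (Real.pi / 2)) (hαβ : α ≠ β) :
    (∃ (a : Fin 2 → ℂ) (w : Fin 2 × Fin 2 → ℂ) (d : Fin 2 → ℂ),
      (fun p : Q4 => a p.1 * w (p.2.1, p.2.2.1) * d p.2.2.2) ≠ 0 ∧
      ∀ t, ip (S6 α β t) (fun p : Q4 => a p.1 * w (p.2.1, p.2.2.1) * d p.2.2.2) = 0) ∧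
    (∃ (a : Fin 2 → ℂ) (w : Fin 2 × Fin 2 → ℂ) (c : Fin 2 → ℂ),
      (fun p : Q4 => a p.1 * w (p.2.1, p.2.2.2) * c p.2.2.1) ≠ 0 ∧
      ∀ t, ip (S6 α β t) (fun p : Q4 => a p.1 * w (p.2.1, p.2.2.2) * c p.2.2.1) = 0) ∧
    (∃ (w : Fin 2 × Fin 2 → ℂ) (b : Fin 2 → ℂ) (d : Fin 2 → ℂ),
      (fun p : Q4 => w (p.1, p.2.2.1) * b p.2.1 * d p.2.2.2) ≠ 0 ∧
      ∀ t, ip (S6 α β t) (fun p : Q4 => w (p.1, p.2.2.1) * b p.2.1 * d p.2.2.2) = 0) ∧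
    (∃ (w : Fin 2 × Fin 2 → ℂ) (b : Fin 2 → ℂ) (c : Fin 2 → ℂ),
      (fun p : Q4 => w (p.1, p.2.2.2) * b p.2.1 * c p.2.2.1) ≠ 0 ∧
      ∀ t, ip (S6 α β t) (fun p : Q4 => w (p.1, p.2.2.2) * b p.2.1 * c p.2.2.1) = 0) := by
  have h1 : (Real.sin α : ℂ) ≠ 0 := by
    exact_mod_cast (Real.sin_pos_of_pos_of_lt_pi hα.1 (by linarith [hα.2, Real.pi_pos])).ne'
  have h2 : (Real.cos α : ℂ) ≠ 0 := by
    exact_mod_cast (Real.cos_pos_of_mem_Ioo ⟨by linarith [hα.1, Real.pi_pos], hα.2⟩).ne'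
  have h3 : (Real.sin β : ℂ) ≠ 0 := by
    exact_mod_cast (Real.sin_pos_of_pos_of_lt_pi hβ.1 (by linarith [hβ.2, Real.pi_pos])).ne'
  have h4 : (Real.cos β : ℂ) ≠ 0 := by
    exact_mod_cast (Real.cos_pos_of_mem_Ioo ⟨by linarith [hβ.1, Real.pi_pos], hβ.2⟩).ne'
  have k1 := Complex.conj_ofReal (Real.sin α)
  have k2 := Complex.conj_ofReal (Real.cos α)
  have k3 := Complex.conj_ofReal (Real.sin β)
  have k4 := Complex.conj_ofReal (Real.cos β)
  simp only [ip, S6, ket0, ket1, vk, vk']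
  generalize (Real.sin α : ℂ) = s at *
  generalize (Real.cos α : ℂ) = c at *
  generalize (Real.sin β : ℂ) = S at *
  generalize (Real.cos β : ℂ) = C at *
  refine ⟨⟨![1, 0], (fun q => ![![0, c], ![c, s]] q.1 q.2), ![1, 0], fun h => ?_, fun t => ?_⟩,
    ⟨![1, 0], (fun q => ![![0, -s * S], ![C * c, S * c]] q.1 q.2), ![1, 0], fun h => ?_, fun t => ?_⟩,
    ⟨(fun q => ![![0, c * C], ![-S * s, C * s]] q.1 q.2), ![s, -c], ![C, S], fun h => ?_, fun t => ?_⟩,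
    ⟨(fun q => ![![0, s ^ 2 + c ^ 2], ![-s ^ 2, c * s]] q.1 q.2), ![s, -c], ![c, s], fun h => ?_, fun t => ?_⟩⟩
  · have := congrFun h (0, 1, 1, 0)
    simp [h1, h2, h3, h4] at this
  · fin_cases t <;> simp [pv, Fintype.sum_prod_type, k1, k2, k3, k4] <;> try ring
  · have := congrFun h (0, 1, 0, 1)
    simp [h1, h2, h3, h4] at this
  · fin_cases t <;> simp [pv, Fintype.sum_prod_type, k1, k2, k3, k4] <;> try ring
  · have := congrFun h (1, 1, 1, 1)
    simp [h1, h2, h3, h4] at this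
  · fin_cases t <;> simp [pv, Fintype.sum_prod_type, k1, k2, k3, k4] <;> try ring
  · have := congrFun h (1, 1, 1, 1)
    simp [h1, h2, h3, h4] at this
  · fin_cases t <;> simp [pv, Fintype.sum_prod_type, k1, k2, k3, k4] <;> try ring
end

section
/- For all α, β ∈ (0, π/2) with α ≠ β, the family S₆ is not a UPB for any of the three bipartite 4×4 groupings AB:CD, AC:BD, AD:BC. That is: there exist nonzero product vectors of each of the forms (i,j,k,l) ↦ u (i,j) · w (k,l), (i,j,k,l) ↦ u (i,k) · w (j,l), and (i,j,k,l) ↦ u (i,l) · w (j,k) (with u, w : Fin 2 × Fin 2 → ℂ), each orthogonal to all six members of S₆. -/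
/-- Inner product of a two-qubit product vector with a two-qubit vector. -/
noncomputable def ip2 (x y : Fin 2 → ℂ) (u : Fin 2 × Fin 2 → ℂ) : ℂ :=
  ∑ p : Fin 2 × Fin 2, (starRingEnd ℂ) (x p.1 * y p.2) * u p

/-- Three vectors in a four-dimensional space have a common nonzero orthogonal vector. -/
lemma exists_orth_s7 (x y : Fin 3 → Fin 2 → ℂ) :
    ∃ u : Fin 2 × Fin 2 → ℂ, u ≠ 0 ∧ ∀ i, ip2 (x i) (y i) u = 0 := by
  let M : Matrix (Fin 3) (Fin 2 × Fin 2) ℂ :=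
    Matrix.of fun i p => (starRingEnd ℂ) (x i p.1 * y i p.2)
  have h : LinearMap.ker (Matrix.mulVecLin M) ≠ ⊥ :=
    LinearMap.ker_ne_bot_of_finrank_lt (by simp)
  obtain ⟨u, hu, hne⟩ := Submodule.exists_mem_ne_zero_of_ne_bot h
  refine ⟨u, hne, fun i => ?_⟩
  have := congrFun (LinearMap.mem_ker.mp hu) i
  simpa [M, ip2, Matrix.mulVec, dotProduct] using this

lemma ip_AB (x y z w : Fin 2 → ℂ) (u v : Fin 2 × Fin 2 → ℂ) :
    ip (pv x y z w) (fun p : Q4 => u (p.1, p.2.1) * v (p.2.2.1, p.2.2.2))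
      = ip2 x y u * ip2 z w v := by
  simp only [ip, ip2, pv, Fintype.sum_prod_type, Fin.sum_univ_two, map_mul]
  ring

lemma ip_AC (x y z w : Fin 2 → ℂ) (u v : Fin 2 × Fin 2 → ℂ) :
    ip (pv x y z w) (fun p : Q4 => u (p.1, p.2.2.1) * v (p.2.1, p.2.2.2))
      = ip2 x z u * ip2 y w v := by
  simp only [ip, ip2, pv, Fintype.sum_prod_type, Fin.sum_univ_two, map_mul]
  ring

lemma ip_AD (x y z w : Fin 2 → ℂ) (u v : Fin 2 × Fin 2 → ℂ) :
    ip (pv x y z w) (fun p : Q4 => u (p.1, p.2.2.2) * v (p.2.1, p.2.2.1))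
      = ip2 x w u * ip2 y z v := by
  simp only [ip, ip2, pv, Fintype.sum_prod_type, Fin.sum_univ_two, map_mul]
  ring

/-- `S₆` is not a UPB for any of the bipartite `4 × 4` groupings `AB:CD`, `AC:BD`,
`AD:BC`: for each there is a nonzero product vector of the corresponding form
orthogonal to all six members. -/
theorem stmt7 (α β : ℝ) (hα : α ∈ Set.Ioo 0 (Real.pi / 2))
    (hβ : β ∈ Set.Ioo 0 (Real.pi / 2)) (hαβ : α ≠ β) :
    (∃ u w : Fin 2 × Fin 2 → ℂ,
      (fun p : Q4 => u (p.1, p.2.1) * w (p.2.2.1, p.2.2.2)) ≠ 0 ∧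
      ∀ t, ip (S6 α β t) (fun p : Q4 => u (p.1, p.2.1) * w (p.2.2.1, p.2.2.2)) = 0) ∧
    (∃ u w : Fin 2 × Fin 2 → ℂ,
      (fun p : Q4 => u (p.1, p.2.2.1) * w (p.2.1, p.2.2.2)) ≠ 0 ∧
      ∀ t, ip (S6 α β t) (fun p : Q4 => u (p.1, p.2.2.1) * w (p.2.1, p.2.2.2)) = 0) ∧
    (∃ u w : Fin 2 × Fin 2 → ℂ,
      (fun p : Q4 => u (p.1, p.2.2.2) * w (p.2.1, p.2.2.1)) ≠ 0 ∧
      ∀ t, ip (S6 α β t) (fun p : Q4 => u (p.1, p.2.2.2) * w (p.2.1, p.2.2.1)) = 0) := by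
  refine ⟨?_, ?_, ?_⟩
  · obtain ⟨u, hu, hu0⟩ := exists_orth_s7 ![ket0, ket0, ket1]
      ![ket0, vk α, ket0]
    obtain ⟨w, hw, hw0⟩ := exists_orth_s7 ![vk' β, vk' α, ket1]
      ![vk β, vk' β, vk' α]
    refine ⟨u, w, fun h => ?_, fun t => ?_⟩
    · obtain ⟨p, hp⟩ := Function.ne_iff.mp hu
      obtain ⟨q, hq⟩ := Function.ne_iff.mp hw
      exact mul_ne_zero hp hq (congrFun h (p.1, p.2, q.1, q.2))
    · fin_cases t
      · exact (ip_AB _ _ _ _ u w).trans (mul_eq_zero_of_left (hu0 0) _)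
      · exact (ip_AB _ _ _ _ u w).trans (mul_eq_zero_of_left (hu0 1) _)
      · exact (ip_AB _ _ _ _ u w).trans (mul_eq_zero_of_left (hu0 2) _)
      · exact (ip_AB _ _ _ _ u w).trans (mul_eq_zero_of_right _ (hw0 0))
      · exact (ip_AB _ _ _ _ u w).trans (mul_eq_zero_of_right _ (hw0 1))
      · exact (ip_AB _ _ _ _ u w).trans (mul_eq_zero_of_right _ (hw0 2))
  · obtain ⟨u, hu, hu0⟩ := exists_orth_s7 ![ket0, ket0, ket1]
      ![ket0, vk α, vk β]
    obtain ⟨w, hw, hw0⟩ := exists_orth_s7 ![vk α, ket1, vk' α]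
      ![vk β, vk' β, vk' α]
    refine ⟨u, w, fun h => ?_, fun t => ?_⟩
    · obtain ⟨p, hp⟩ := Function.ne_iff.mp hu
      obtain ⟨q, hq⟩ := Function.ne_iff.mp hw
      exact mul_ne_zero hp hq (congrFun h (p.1, q.1, p.2, q.2))
    · fin_cases t
      · exact (ip_AC _ _ _ _ u w).trans (mul_eq_zero_of_left (hu0 0) _)
      · exact (ip_AC _ _ _ _ u w).trans (mul_eq_zero_of_left (hu0 1) _)
      · exact (ip_AC _ _ _ _ u w).trans (mul_eq_zero_of_left (hu0 2) _)
      · exact (ip_AC _ _ _ _ u w).trans (mul_eq_zero_of_right _ (hw0 0))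
      · exact (ip_AC _ _ _ _ u w).trans (mul_eq_zero_of_right _ (hw0 1))
      · exact (ip_AC _ _ _ _ u w).trans (mul_eq_zero_of_right _ (hw0 2))
  · obtain ⟨u, hu, hu0⟩ := exists_orth_s7 ![ket0, ket0, ket1]
      ![ket0, ket1, vk α]
    obtain ⟨w, hw, hw0⟩ := exists_orth_s7 ![vk α, ket1, vk' α]
      ![vk' β, vk' α, ket1]
    refine ⟨u, w, fun h => ?_, fun t => ?_⟩
    · obtain ⟨p, hp⟩ := Function.ne_iff.mp hu
      obtain ⟨q, hq⟩ := Function.ne_iff.mp hw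
      exact mul_ne_zero hp hq (congrFun h (p.1, q.1, q.2, p.2))
    · fin_cases t
      · exact (ip_AD _ _ _ _ u w).trans (mul_eq_zero_of_left (hu0 0) _)
      · exact (ip_AD _ _ _ _ u w).trans (mul_eq_zero_of_left (hu0 1) _)
      · exact (ip_AD _ _ _ _ u w).trans (mul_eq_zero_of_left (hu0 2) _)
      · exact (ip_AD _ _ _ _ u w).trans (mul_eq_zero_of_right _ (hw0 0))
      · exact (ip_AD _ _ _ _ u w).trans (mul_eq_zero_of_right _ (hw0 1))
      · exact (ip_AD _ _ _ _ u w).trans (mul_eq_zero_of_right _ (hw0 2))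
end

section
/- For all α, β ∈ (0, π/2), the size-7 family T₇ is not a UPB for any of the three bipartite 4×4 groupings AB:CD, AC:BD, AD:BC: there exist nonzero product vectors of each of the forms (i,j,k,l) ↦ u (i,j) · w (k,l), (i,j,k,l) ↦ u (i,k) · w (j,l), and (i,j,k,l) ↦ u (i,l) · w (j,k) (with u, w : Fin 2 × Fin 2 → ℂ), each orthogonal to all seven members of T₇. -/
/-- The 4-qubit UPB of size 7:
`{|0,0,0,0⟩, |0,a,a,1⟩, |0,a',1,a⟩, |1,0,0,b⟩, |1,a',a,b'⟩, |a,a,1,0⟩, |a',1,a',a'⟩}`. -/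
noncomputable def T7 (α β : ℝ) : Fin 7 → Q4 → ℂ :=
  ![pv ket0 ket0 ket0 ket0,
    pv ket0 (vk α) (vk α) ket1,
    pv ket0 (vk' α) ket1 (vk α),
    pv ket1 ket0 ket0 (vk β),
    pv ket1 (vk' α) (vk α) (vk' β),
    pv (vk α) (vk α) ket1 ket0,
    pv (vk' α) ket1 (vk' α) (vk' α)]

/-- `T₇` is not a UPB for any of the bipartite `4 × 4` groupings `AB:CD`, `AC:BD`,
`AD:BC`: for each there is a nonzero product vector of the corresponding form
orthogonal to all seven members. -/
theorem stmt9 (α β : ℝ) (hα : α ∈ Set.Ioo 0 (Real.pi / 2))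
    (hβ : β ∈ Set.Ioo 0 (Real.pi / 2)) :
    (∃ u w : Fin 2 × Fin 2 → ℂ,
      (fun p : Q4 => u (p.1, p.2.1) * w (p.2.2.1, p.2.2.2)) ≠ 0 ∧
      ∀ t, ip (T7 α β t) (fun p : Q4 => u (p.1, p.2.1) * w (p.2.2.1, p.2.2.2)) = 0) ∧
    (∃ u w : Fin 2 × Fin 2 → ℂ,
      (fun p : Q4 => u (p.1, p.2.2.1) * w (p.2.1, p.2.2.2)) ≠ 0 ∧
      ∀ t, ip (T7 α β t) (fun p : Q4 => u (p.1, p.2.2.1) * w (p.2.1, p.2.2.2)) = 0) ∧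
    (∃ u w : Fin 2 × Fin 2 → ℂ,
      (fun p : Q4 => u (p.1, p.2.2.2) * w (p.2.1, p.2.2.1)) ≠ 0 ∧
      ∀ t, ip (T7 α β t) (fun p : Q4 => u (p.1, p.2.2.2) * w (p.2.1, p.2.2.1)) = 0) := by
  have hs : (Real.sin α : ℂ) ≠ 0 := by
    exact_mod_cast (Real.sin_pos_of_pos_of_lt_pi hα.1 (by linarith [hα.2, Real.pi_pos])).ne'
  have hc : (Real.cos α : ℂ) ≠ 0 := by
    exact_mod_cast (Real.cos_pos_of_mem_Ioo ⟨by linarith [hα.1, Real.pi_pos], hα.2⟩).ne'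
  have hsb : (Real.sin β : ℂ) ≠ 0 := by
    exact_mod_cast (Real.sin_pos_of_pos_of_lt_pi hβ.1 (by linarith [hβ.2, Real.pi_pos])).ne'
  have hcb : (Real.cos β : ℂ) ≠ 0 := by
    exact_mod_cast (Real.cos_pos_of_mem_Ioo ⟨by linarith [hβ.1, Real.pi_pos], hβ.2⟩).ne'
  have h1 : (Real.sin α : ℂ) ^ 2 + (Real.cos α : ℂ) ^ 2 = 1 := by
    exact_mod_cast Real.sin_sq_add_cos_sq α
  have e0 : ∀ f : Q4 → ℂ, f = 0 → ∀ p, f p = 0 := fun f h p => by rw [h]; rfl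
  unfold ip T7 pv vk vk' ket0 ket1
  generalize (Real.sin α) = s at *
  generalize (Real.cos α) = c at *
  generalize (Real.sin β) = sb at *
  generalize (Real.cos β) = cb at *
  refine ⟨⟨fun p => !![0, 0; 0, 1] p.1 p.2,
      fun p => !![-(c : ℂ) * cb * (s ^ 2 + c ^ 2), -(s : ℂ) ^ 3 * cb - c ^ 3 * sb;
        0, -(s : ℂ) * c ^ 2 * sb + c * s ^ 2 * cb] p.1 p.2, ?_, ?_⟩,
    ⟨fun p => !![0, 0; 0, 1] p.1 p.2,
      fun p => !![-(s : ℂ) ^ 2 * cb, -(sb : ℂ) * (s ^ 2 + c ^ 2) + c * s * cb;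
        (c : ℂ) * s * cb, (s : ℂ) ^ 2 * cb] p.1 p.2, ?_, ?_⟩,
    ⟨fun p => !![0, 0; (sb : ℂ), -(cb : ℂ)] p.1 p.2,
      fun p => !![(s : ℂ) ^ 4 + c ^ 4 + c ^ 2 * s ^ 2, -(s : ℂ) ^ 3 * c;
        (s : ℂ) * c ^ 3, (c : ℂ) ^ 2 * s ^ 2] p.1 p.2, ?_, ?_⟩⟩
  · intro h
    have := e0 _ h (1, 1, 0, 0)
    simp [h1, hc, hcb] at this
  · intro t
    fin_cases t <;> simp [Fintype.sum_prod_type] <;> ring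
  · intro h
    have := e0 _ h (1, 1, 1, 1)
    simp [hs, hcb] at this
  · intro t
    fin_cases t <;> simp [Fintype.sum_prod_type] <;> ring
  · intro h
    have := e0 _ h (1, 1, 1, 0)
    simp [hs, hc, hsb] at this
  · intro t
    fin_cases t <;> simp [Fintype.sum_prod_type] <;> ring
end

section
/- For all α, β, γ, δ ∈ (0, π/2), the size-9 family S₉ is a UPB for each of the three bipartite 4×4 groupings AB:CD, AC:BD, AD:BC: if a vector of the form (i,j,k,l) ↦ u (i,j) · w (k,l) (respectively (i,j,k,l) ↦ u (i,k) · w (j,l), or (i,j,k,l) ↦ u (i,l) · w (j,k), with u, w : Fin 2 × Fin 2 → ℂ) is orthogonal to all nine members of S₉, then it is the zero vector. -/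
/-- The 4-qubit UPB of size 9:
`{|0,0,1,d⟩, |0,1,c,0⟩, |0,b,0,1⟩, |1,1,0,d⟩, |1,b,1,0⟩, |1,0,c,1⟩, |a,0,0,0⟩,
 |a,1,1,1⟩, |a',b',c',d'⟩}`. -/
noncomputable def S9 (α β γ δ : ℝ) : Fin 9 → Q4 → ℂ :=
  ![pv ket0 ket0 ket1 (vk δ),
    pv ket0 ket1 (vk γ) ket0,
    pv ket0 (vk β) ket0 ket1,
    pv ket1 ket1 ket0 (vk δ),
    pv ket1 (vk β) ket1 ket0,
    pv ket1 ket0 (vk γ) ket1,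
    pv (vk α) ket0 ket0 ket0,
    pv (vk α) ket1 ket1 ket1,
    pv (vk' α) (vk' β) (vk' γ) (vk' δ)]

theorem key (ca sa cb sb cc sc cd sd u0 u1 u2 u3 w0 w1 w2 w3 : ℂ)
  (h1 : ca ≠ 0) (h2 : sa ≠ 0) (h3 : cb ≠ 0) (h4 : sb ≠ 0) (h5 : cc ≠ 0) (h6 : sc ≠ 0) (h7 : cd ≠ 0) (h8 : sd ≠ 0)
  (ha : ca^2+sa^2=1) (hb : cb^2+sb^2=1) (hc : cc^2+sc^2=1) (hd : cd^2+sd^2=1)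
  (e1 : u0 = 0 ∨ cd*w2+sd*w3=0)
  (e2 : u1 = 0 ∨ cc*w0+sc*w2=0)
  (e4 : u3 = 0 ∨ cd*w0+sd*w1=0)
  (e6 : u2 = 0 ∨ cc*w1+sc*w3=0)
  (e3 : cb*u0+sb*u1 = 0 ∨ w1=0)
  (e5 : cb*u2+sb*u3 = 0 ∨ w2=0)
  (e7 : ca*u0+sa*u2 = 0 ∨ w0=0)
  (e8 : ca*u1+sa*u3 = 0 ∨ w3=0)
  (e9 : sa*sb*u0-sa*cb*u1-ca*sb*u2+ca*cb*u3 = 0 ∨ sc*sd*w0-sc*cd*w1-cc*sd*w2+cc*cd*w3=0) :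
  (u0=0∧u1=0∧u2=0∧u3=0) ∨ (w0=0∧w1=0∧w2=0∧w3=0) := by
  rcases e1 with e1|e1 <;> rcases e2 with e2|e2 <;> rcases e4 with e4|e4 <;> rcases e6 with e6|e6 <;>
  rcases e3 with e3|e3 <;> rcases e5 with e5|e5 <;> rcases e7 with e7|e7 <;> rcases e8 with e8|e8 <;>
  (try simp_all only [ne_eq,mul_zero,add_zero,zero_add,sub_zero,zero_sub,neg_eq_zero,mul_eq_zero,false_or,or_false,or_true,true_or,and_true,true_and,and_self]) <;>
  first | done | (simp_all; done) | grind

theorem trig_facts (t : ℝ) (ht : t ∈ Set.Ioo 0 (Real.pi / 2)) :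
    (Real.cos t : ℂ) ≠ 0 ∧ (Real.sin t : ℂ) ≠ 0 ∧ (Real.cos t : ℂ)^2 + (Real.sin t : ℂ)^2 = 1 := by
  have h1 : 0 < Real.cos t := Real.cos_pos_of_mem_Ioo ⟨by linarith [ht.1, Real.pi_pos], ht.2⟩
  have h2 : 0 < Real.sin t := Real.sin_pos_of_pos_of_lt_pi ht.1 (by linarith [ht.2, Real.pi_pos])
  refine ⟨by exact_mod_cast h1.ne', by exact_mod_cast h2.ne', ?_⟩
  exact_mod_cast Real.cos_sq_add_sin_sq t

/-- `S₉` is a UPB for each of the bipartite `4 × 4` groupings `AB:CD`, `AC:BD`,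
`AD:BC`: any product vector for one of these groupings orthogonal to all nine
members is zero. -/
theorem stmt10 (α β γ δ : ℝ) (hα : α ∈ Set.Ioo 0 (Real.pi / 2))
    (hβ : β ∈ Set.Ioo 0 (Real.pi / 2)) (hγ : γ ∈ Set.Ioo 0 (Real.pi / 2))
    (hδ : δ ∈ Set.Ioo 0 (Real.pi / 2)) :
    (∀ u w : Fin 2 × Fin 2 → ℂ,
      (∀ t, ip (S9 α β γ δ t) (fun p : Q4 => u (p.1, p.2.1) * w (p.2.2.1, p.2.2.2)) = 0) →
      (fun p : Q4 => u (p.1, p.2.1) * w (p.2.2.1, p.2.2.2)) = 0) ∧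
    (∀ u w : Fin 2 × Fin 2 → ℂ,
      (∀ t, ip (S9 α β γ δ t) (fun p : Q4 => u (p.1, p.2.2.1) * w (p.2.1, p.2.2.2)) = 0) →
      (fun p : Q4 => u (p.1, p.2.2.1) * w (p.2.1, p.2.2.2)) = 0) ∧
    (∀ u w : Fin 2 × Fin 2 → ℂ,
      (∀ t, ip (S9 α β γ δ t) (fun p : Q4 => u (p.1, p.2.2.2) * w (p.2.1, p.2.2.1)) = 0) →
      (fun p : Q4 => u (p.1, p.2.2.2) * w (p.2.1, p.2.2.1)) = 0) := by
  obtain ⟨hca, hsa, qa⟩ := trig_facts α hα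
  obtain ⟨hcb, hsb, qb⟩ := trig_facts β hβ
  obtain ⟨hcc, hsc, qc⟩ := trig_facts γ hγ
  obtain ⟨hcd, hsd, qd⟩ := trig_facts δ hδ
  refine ⟨?_, ?_, ?_⟩
  · intro u w h
    have h1 := h 0
    have h2 := h 1
    have h3 := h 2
    have h4 := h 3
    have h5 := h 4
    have h6 := h 5
    have h7 := h 6
    have h8 := h 7
    have h9 := h 8
    simp only [Fin.isValue, ip, S9, pv, ket0, ket1, vk, vk', Fintype.sum_prod_type, Fin.sum_univ_two, Matrix.cons_val, Matrix.cons_val_zero, Matrix.cons_val_one, map_mul, map_neg, map_zero, map_one, Complex.conj_ofReal, mul_zero, zero_mul, mul_one, one_mul, add_zero, zero_add] at h1 h2 h3 h4 h5 h6 h7 h8 h9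
    have H := key _ _ _ _ _ _ _ _ (u (0,0)) (u (0,1)) (u (1,0)) (u (1,1)) (w (0,0)) (w (0,1)) (w (1,0)) (w (1,1)) hca hsa hcb hsb hcc hsc hcd hsd qa qb qc qd
      (mul_eq_zero.mp (by linear_combination h1))
      (mul_eq_zero.mp (by linear_combination h2))
      (mul_eq_zero.mp (by linear_combination h4))
      (mul_eq_zero.mp (by linear_combination h6))
      (mul_eq_zero.mp (by linear_combination h3))
      (mul_eq_zero.mp (by linear_combination h5))
      (mul_eq_zero.mp (by linear_combination h7))
      (mul_eq_zero.mp (by linear_combination h8))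
      (mul_eq_zero.mp (by linear_combination h9))
    funext ⟨i, j, k, l⟩
    rcases H with ⟨x0, x1, x2, x3⟩ | ⟨x0, x1, x2, x3⟩ <;> fin_cases i <;> fin_cases j <;> fin_cases k <;> fin_cases l <;> simp [x0, x1, x2, x3]
  · intro u w h
    have h1 := h 0
    have h2 := h 1
    have h3 := h 2
    have h4 := h 3
    have h5 := h 4
    have h6 := h 5
    have h7 := h 6
    have h8 := h 7
    have h9 := h 8
    simp only [Fin.isValue, ip, S9, pv, ket0, ket1, vk, vk', Fintype.sum_prod_type, Fin.sum_univ_two, Matrix.cons_val, Matrix.cons_val_zero, Matrix.cons_val_one, map_mul, map_neg, map_zero, map_one, Complex.conj_ofReal, mul_zero, zero_mul, mul_one, one_mul, add_zero, zero_add] at h1 h2 h3 h4 h5 h6 h7 h8 h9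
    have H := key _ _ _ _ _ _ _ _ (u (0,0)) (u (0,1)) (u (1,0)) (u (1,1)) (w (0,0)) (w (1,0)) (w (0,1)) (w (1,1)) hca hsa hcc hsc hcd hsd hcb hsb qa qc qd qb
      (mul_eq_zero.mp (by linear_combination h3))
      (mul_eq_zero.mp (by linear_combination h1))
      (mul_eq_zero.mp (by linear_combination h5))
      (mul_eq_zero.mp (by linear_combination h4))
      (mul_eq_zero.mp (by linear_combination h2))
      (mul_eq_zero.mp (by linear_combination h6))
      (mul_eq_zero.mp (by linear_combination h7))
      (mul_eq_zero.mp (by linear_combination h8))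
      (mul_eq_zero.mp (by linear_combination h9))
    funext ⟨i, j, k, l⟩
    rcases H with ⟨x0, x1, x2, x3⟩ | ⟨x0, x1, x2, x3⟩ <;> fin_cases i <;> fin_cases j <;> fin_cases k <;> fin_cases l <;> simp [x0, x1, x2, x3]
  · intro u w h
    have h1 := h 0
    have h2 := h 1
    have h3 := h 2
    have h4 := h 3
    have h5 := h 4
    have h6 := h 5
    have h7 := h 6
    have h8 := h 7
    have h9 := h 8
    simp only [Fin.isValue, ip, S9, pv, ket0, ket1, vk, vk', Fintype.sum_prod_type, Fin.sum_univ_two, Matrix.cons_val, Matrix.cons_val_zero, Matrix.cons_val_one, map_mul, map_neg, map_zero, map_one, Complex.conj_ofReal, mul_zero, zero_mul, mul_one, one_mul, add_zero, zero_add] at h1 h2 h3 h4 h5 h6 h7 h8 h9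
    have H := key _ _ _ _ _ _ _ _ (u (0,0)) (u (0,1)) (u (1,0)) (u (1,1)) (w (0,0)) (w (0,1)) (w (1,0)) (w (1,1)) hca hsa hcd hsd hcb hsb hcc hsc qa qd qb qc
      (mul_eq_zero.mp (by linear_combination h2))
      (mul_eq_zero.mp (by linear_combination h3))
      (mul_eq_zero.mp (by linear_combination h6))
      (mul_eq_zero.mp (by linear_combination h5))
      (mul_eq_zero.mp (by linear_combination h1))
      (mul_eq_zero.mp (by linear_combination h4))
      (mul_eq_zero.mp (by linear_combination h7))
      (mul_eq_zero.mp (by linear_combination h8))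
      (mul_eq_zero.mp (by linear_combination h9))
    funext ⟨i, j, k, l⟩
    rcases H with ⟨x0, x1, x2, x3⟩ | ⟨x0, x1, x2, x3⟩ <;> fin_cases i <;> fin_cases j <;> fin_cases k <;> fin_cases l <;> simp [x0, x1, x2, x3]
end

section
/- For all α, β, γ, δ ∈ (0, π/2), the size-9 family S₉ is a UPB for each of the six groupings of type 2×2×4 (A:B:CD, A:C:BD, A:D:BC, B:C:AD, B:D:AC, C:D:AB): for each way of merging exactly one pair of the four qubit factors into a ℂ⁴ block, the only product vector for that grouping orthogonal to all nine members of S₉ is the zero vector. -/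
lemma fin4 {G : Prop} (p q r s : ℂ) (h : (p = 0 ∧ q = 0 ∧ r = 0 ∧ s = 0) → G)
    (h' : p = 0 ∧ q = 0 ∧ r = 0 ∧ s = 0) : G := h h'

lemma or3 {x y z : ℂ} (h : x * y * z = 0) : x = 0 ∨ y = 0 ∨ z = 0 := by
  simpa [mul_eq_zero, or_assoc] using h

/-- A nondegenerate point of the unit circle. -/
def Ok (c s : ℂ) : Prop := c ≠ 0 ∧ s ≠ 0 ∧ c ^ 2 + s ^ 2 = 1

/-- The possible vanishing patterns of the four linear forms. -/
def Pat (x0 x1 xv xw : ℂ) : Prop :=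
  (x0 = 0 ∧ x1 ≠ 0 ∧ xv ≠ 0 ∧ xw ≠ 0) ∨ (x0 ≠ 0 ∧ x1 = 0 ∧ xv ≠ 0 ∧ xw ≠ 0) ∨
  (x0 ≠ 0 ∧ x1 ≠ 0 ∧ xv = 0 ∧ xw ≠ 0) ∨ (x0 ≠ 0 ∧ x1 ≠ 0 ∧ xv ≠ 0)

lemma tri (x0 x1 c s : ℂ) (ok : Ok c s)
    (hx : ¬ (x0 = 0 ∧ x1 = 0)) :
    Pat x0 x1 (c * x0 + s * x1) (s * x0 - c * x1) := by
  obtain ⟨hc, hs, h⟩ := ok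
  by_cases h0 : x0 = 0
  · left; subst h0; simp_all
  by_cases h1 : x1 = 0
  · right; left; subst h1; simp_all
  right; right
  by_cases h2 : c * x0 + s * x1 = 0
  · left
    refine ⟨h0, h1, h2, fun h3 => h0 ?_⟩
    linear_combination (-x0) * h + c * h2 + s * h3
  · right; exact ⟨h0, h1, h2⟩

lemma core_cd (x0 x1 xv xw y0 y1 yv yw w00 w01 w10 w11 ca sa cb sb : ℂ)
    (ha : Ok ca sa)
    (hb : Ok cb sb)
    (hx : Pat x0 x1 xv xw) (hy : Pat y0 y1 yv yw)
    (e1 : x1 = 0 ∨ yv = 0 ∨ w00 = 0)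
    (e2 : xv = 0 ∨ y0 = 0 ∨ w01 = 0)
    (e3 : x0 = 0 ∨ y1 = 0 ∨ cb * w00 + sb * w01 = 0)
    (e4 : x0 = 0 ∨ yv = 0 ∨ w11 = 0)
    (e5 : x1 = 0 ∨ y0 = 0 ∨ cb * w10 + sb * w11 = 0)
    (e6 : xv = 0 ∨ y1 = 0 ∨ w10 = 0)
    (e7 : x0 = 0 ∨ y0 = 0 ∨ ca * w00 + sa * w10 = 0)
    (e8 : x1 = 0 ∨ y1 = 0 ∨ ca * w01 + sa * w11 = 0)
    (e9 : xw = 0 ∨ yw = 0 ∨ sa * (sb * w00 - cb * w01) - ca * (sb * w10 - cb * w11) = 0) :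
    w00 = 0 ∧ w01 = 0 ∧ w10 = 0 ∧ w11 = 0 := by
  obtain ⟨⟨r1, r2, r3⟩, r4, r5, r6⟩ := And.intro ha hb
  obtain ⟨p1, p2, p3, p4⟩ | ⟨p1, p2, p3, p4⟩ | ⟨p1, p2, p3, p4⟩ | ⟨p1, p2, p3⟩ :=
    hx <;>
  obtain ⟨q1, q2, q3, q4⟩ | ⟨q1, q2, q3, q4⟩ | ⟨q1, q2, q3, q4⟩ | ⟨q1, q2, q3⟩ :=
    hy <;>
  simp only [p1, p2, p3, q1, q2, q3, true_or, or_true, false_or] at e1 e2 e3 e4 e5 e6 e7 e8 <;>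
  (try simp only [p4, q4, false_or] at e9) <;>
  clear p1 p2 p3 q1 q2 q3 <;>
  grind

lemma core_bd (x0 x1 xv xw y0 y1 yv yw w00 w01 w10 w11 ca sa cc sc : ℂ)
    (ha : Ok ca sa)
    (hc : Ok cc sc)
    (hx : Pat x0 x1 xv xw) (hy : Pat y0 y1 yv yw)
    (e1 : x0 = 0 ∨ yv = 0 ∨ w01 = 0)
    (e2 : x1 = 0 ∨ y0 = 0 ∨ cc * w00 + sc * w01 = 0)
    (e3 : xv = 0 ∨ y1 = 0 ∨ w00 = 0)
    (e4 : x1 = 0 ∨ yv = 0 ∨ w10 = 0)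
    (e5 : xv = 0 ∨ y0 = 0 ∨ w11 = 0)
    (e6 : x0 = 0 ∨ y1 = 0 ∨ cc * w10 + sc * w11 = 0)
    (e7 : x0 = 0 ∨ y0 = 0 ∨ ca * w00 + sa * w10 = 0)
    (e8 : x1 = 0 ∨ y1 = 0 ∨ ca * w01 + sa * w11 = 0)
    (e9 : xw = 0 ∨ yw = 0 ∨ sa * (sc * w00 - cc * w01) - ca * (sc * w10 - cc * w11) = 0) :
    w00 = 0 ∧ w01 = 0 ∧ w10 = 0 ∧ w11 = 0 := by
  obtain ⟨⟨r1, r2, r3⟩, r4, r5, r6⟩ := And.intro ha hc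
  obtain ⟨p1, p2, p3, p4⟩ | ⟨p1, p2, p3, p4⟩ | ⟨p1, p2, p3, p4⟩ | ⟨p1, p2, p3⟩ :=
    hx <;>
  obtain ⟨q1, q2, q3, q4⟩ | ⟨q1, q2, q3, q4⟩ | ⟨q1, q2, q3, q4⟩ | ⟨q1, q2, q3⟩ :=
    hy <;>
  simp only [p1, p2, p3, q1, q2, q3, true_or, or_true, false_or] at e1 e2 e3 e4 e5 e6 e7 e8 <;>
  (try simp only [p4, q4, false_or] at e9) <;>
  clear p1 p2 p3 q1 q2 q3 <;>
  grind

lemma core_bc (x0 x1 xv xw y0 y1 yv yw w00 w01 w10 w11 ca sa cd sd : ℂ)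
    (ha : Ok ca sa)
    (hd : Ok cd sd)
    (hx : Pat x0 x1 xv xw) (hy : Pat y0 y1 yv yw)
    (e1 : x0 = 0 ∨ y1 = 0 ∨ cd * w00 + sd * w01 = 0)
    (e2 : x1 = 0 ∨ yv = 0 ∨ w00 = 0)
    (e3 : xv = 0 ∨ y0 = 0 ∨ w01 = 0)
    (e4 : x1 = 0 ∨ y0 = 0 ∨ cd * w10 + sd * w11 = 0)
    (e5 : xv = 0 ∨ y1 = 0 ∨ w10 = 0)
    (e6 : x0 = 0 ∨ yv = 0 ∨ w11 = 0)
    (e7 : x0 = 0 ∨ y0 = 0 ∨ ca * w00 + sa * w10 = 0)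
    (e8 : x1 = 0 ∨ y1 = 0 ∨ ca * w01 + sa * w11 = 0)
    (e9 : xw = 0 ∨ yw = 0 ∨ sa * (sd * w00 - cd * w01) - ca * (sd * w10 - cd * w11) = 0) :
    w00 = 0 ∧ w01 = 0 ∧ w10 = 0 ∧ w11 = 0 := by
  obtain ⟨⟨r1, r2, r3⟩, r4, r5, r6⟩ := And.intro ha hd
  obtain ⟨p1, p2, p3, p4⟩ | ⟨p1, p2, p3, p4⟩ | ⟨p1, p2, p3, p4⟩ | ⟨p1, p2, p3⟩ :=
    hx <;>
  obtain ⟨q1, q2, q3, q4⟩ | ⟨q1, q2, q3, q4⟩ | ⟨q1, q2, q3, q4⟩ | ⟨q1, q2, q3⟩ :=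
    hy <;>
  simp only [p1, p2, p3, q1, q2, q3, true_or, or_true, false_or] at e1 e2 e3 e4 e5 e6 e7 e8 <;>
  (try simp only [p4, q4, false_or] at e9) <;>
  clear p1 p2 p3 q1 q2 q3 <;>
  grind

lemma core_ad (x0 x1 xv xw y0 y1 yv yw w00 w01 w10 w11 cb sb cc sc : ℂ)
    (hb : Ok cb sb)
    (hc : Ok cc sc)
    (hx : Pat x0 x1 xv xw) (hy : Pat y0 y1 yv yw)
    (e1 : x0 = 0 ∨ yv = 0 ∨ w01 = 0)
    (e2 : x0 = 0 ∨ y0 = 0 ∨ cc * w10 + sc * w11 = 0)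
    (e3 : x0 = 0 ∨ y1 = 0 ∨ cb * w00 + sb * w10 = 0)
    (e4 : x1 = 0 ∨ yv = 0 ∨ w10 = 0)
    (e5 : x1 = 0 ∨ y0 = 0 ∨ cb * w01 + sb * w11 = 0)
    (e6 : x1 = 0 ∨ y1 = 0 ∨ cc * w00 + sc * w01 = 0)
    (e7 : xv = 0 ∨ y0 = 0 ∨ w00 = 0)
    (e8 : xv = 0 ∨ y1 = 0 ∨ w11 = 0)
    (e9 : xw = 0 ∨ yw = 0 ∨ sb * (sc * w00 - cc * w01) - cb * (sc * w10 - cc * w11) = 0) :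
    w00 = 0 ∧ w01 = 0 ∧ w10 = 0 ∧ w11 = 0 := by
  obtain ⟨⟨r1, r2, r3⟩, r4, r5, r6⟩ := And.intro hb hc
  obtain ⟨p1, p2, p3, p4⟩ | ⟨p1, p2, p3, p4⟩ | ⟨p1, p2, p3, p4⟩ | ⟨p1, p2, p3⟩ :=
    hx <;>
  obtain ⟨q1, q2, q3, q4⟩ | ⟨q1, q2, q3, q4⟩ | ⟨q1, q2, q3, q4⟩ | ⟨q1, q2, q3⟩ :=
    hy <;>
  simp only [p1, p2, p3, q1, q2, q3, true_or, or_true, false_or] at e1 e2 e3 e4 e5 e6 e7 e8 <;>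
  (try simp only [p4, q4, false_or] at e9) <;>
  clear p1 p2 p3 q1 q2 q3 <;>
  grind

lemma core_ac (x0 x1 xv xw y0 y1 yv yw w00 w01 w10 w11 cb sb cd sd : ℂ)
    (hb : Ok cb sb)
    (hd : Ok cd sd)
    (hx : Pat x0 x1 xv xw) (hy : Pat y0 y1 yv yw)
    (e1 : x0 = 0 ∨ y1 = 0 ∨ cd * w00 + sd * w01 = 0)
    (e2 : x0 = 0 ∨ yv = 0 ∨ w10 = 0)
    (e3 : x0 = 0 ∨ y0 = 0 ∨ cb * w01 + sb * w11 = 0)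
    (e4 : x1 = 0 ∨ y0 = 0 ∨ cd * w10 + sd * w11 = 0)
    (e5 : x1 = 0 ∨ y1 = 0 ∨ cb * w00 + sb * w10 = 0)
    (e6 : x1 = 0 ∨ yv = 0 ∨ w01 = 0)
    (e7 : xv = 0 ∨ y0 = 0 ∨ w00 = 0)
    (e8 : xv = 0 ∨ y1 = 0 ∨ w11 = 0)
    (e9 : xw = 0 ∨ yw = 0 ∨ sb * (sd * w00 - cd * w01) - cb * (sd * w10 - cd * w11) = 0) :
    w00 = 0 ∧ w01 = 0 ∧ w10 = 0 ∧ w11 = 0 := by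
  obtain ⟨⟨r1, r2, r3⟩, r4, r5, r6⟩ := And.intro hb hd
  obtain ⟨p1, p2, p3, p4⟩ | ⟨p1, p2, p3, p4⟩ | ⟨p1, p2, p3, p4⟩ | ⟨p1, p2, p3⟩ :=
    hx <;>
  obtain ⟨q1, q2, q3, q4⟩ | ⟨q1, q2, q3, q4⟩ | ⟨q1, q2, q3, q4⟩ | ⟨q1, q2, q3⟩ :=
    hy <;>
  simp only [p1, p2, p3, q1, q2, q3, true_or, or_true, false_or] at e1 e2 e3 e4 e5 e6 e7 e8 <;>
  (try simp only [p4, q4, false_or] at e9) <;>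
  clear p1 p2 p3 q1 q2 q3 <;>
  grind

lemma core_ab (x0 x1 xv xw y0 y1 yv yw w00 w01 w10 w11 cc sc cd sd : ℂ)
    (hc : Ok cc sc)
    (hd : Ok cd sd)
    (hx : Pat x0 x1 xv xw) (hy : Pat y0 y1 yv yw)
    (e1 : x0 = 0 ∨ y0 = 0 ∨ cd * w10 + sd * w11 = 0)
    (e2 : x0 = 0 ∨ y1 = 0 ∨ cc * w00 + sc * w10 = 0)
    (e3 : x0 = 0 ∨ yv = 0 ∨ w01 = 0)
    (e4 : x1 = 0 ∨ y1 = 0 ∨ cd * w00 + sd * w01 = 0)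
    (e5 : x1 = 0 ∨ yv = 0 ∨ w10 = 0)
    (e6 : x1 = 0 ∨ y0 = 0 ∨ cc * w01 + sc * w11 = 0)
    (e7 : xv = 0 ∨ y0 = 0 ∨ w00 = 0)
    (e8 : xv = 0 ∨ y1 = 0 ∨ w11 = 0)
    (e9 : xw = 0 ∨ yw = 0 ∨ sc * (sd * w00 - cd * w01) - cc * (sd * w10 - cd * w11) = 0) :
    w00 = 0 ∧ w01 = 0 ∧ w10 = 0 ∧ w11 = 0 := by
  obtain ⟨⟨r1, r2, r3⟩, r4, r5, r6⟩ := And.intro hc hd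
  obtain ⟨p1, p2, p3, p4⟩ | ⟨p1, p2, p3, p4⟩ | ⟨p1, p2, p3, p4⟩ | ⟨p1, p2, p3⟩ :=
    hx <;>
  obtain ⟨q1, q2, q3, q4⟩ | ⟨q1, q2, q3, q4⟩ | ⟨q1, q2, q3, q4⟩ | ⟨q1, q2, q3⟩ :=
    hy <;>
  simp only [p1, p2, p3, q1, q2, q3, true_or, or_true, false_or] at e1 e2 e3 e4 e5 e6 e7 e8 <;>
  (try simp only [p4, q4, false_or] at e9) <;>
  clear p1 p2 p3 q1 q2 q3 <;>
  grind

/-- `S₉` is a UPB for each of the six `2 × 2 × 4` groupings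
`A:B:CD`, `A:C:BD`, `A:D:BC`, `B:C:AD`, `B:D:AC`, `C:D:AB`: any product vector for
one of these groupings orthogonal to all nine members is zero. -/
theorem stmt11 (α β γ δ : ℝ) (hα : α ∈ Set.Ioo 0 (Real.pi / 2))
    (hβ : β ∈ Set.Ioo 0 (Real.pi / 2)) (hγ : γ ∈ Set.Ioo 0 (Real.pi / 2))
    (hδ : δ ∈ Set.Ioo 0 (Real.pi / 2)) :
    (∀ (a b : Fin 2 → ℂ) (w : Fin 2 × Fin 2 → ℂ),
      (∀ t, ip (S9 α β γ δ t) (fun p : Q4 => a p.1 * b p.2.1 * w (p.2.2.1, p.2.2.2)) = 0) →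
      (fun p : Q4 => a p.1 * b p.2.1 * w (p.2.2.1, p.2.2.2)) = 0) ∧
    (∀ (a c : Fin 2 → ℂ) (w : Fin 2 × Fin 2 → ℂ),
      (∀ t, ip (S9 α β γ δ t) (fun p : Q4 => a p.1 * c p.2.2.1 * w (p.2.1, p.2.2.2)) = 0) →
      (fun p : Q4 => a p.1 * c p.2.2.1 * w (p.2.1, p.2.2.2)) = 0) ∧
    (∀ (a d : Fin 2 → ℂ) (w : Fin 2 × Fin 2 → ℂ),
      (∀ t, ip (S9 α β γ δ t) (fun p : Q4 => a p.1 * d p.2.2.2 * w (p.2.1, p.2.2.1)) = 0) →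
      (fun p : Q4 => a p.1 * d p.2.2.2 * w (p.2.1, p.2.2.1)) = 0) ∧
    (∀ (b c : Fin 2 → ℂ) (w : Fin 2 × Fin 2 → ℂ),
      (∀ t, ip (S9 α β γ δ t) (fun p : Q4 => b p.2.1 * c p.2.2.1 * w (p.1, p.2.2.2)) = 0) →
      (fun p : Q4 => b p.2.1 * c p.2.2.1 * w (p.1, p.2.2.2)) = 0) ∧
    (∀ (b d : Fin 2 → ℂ) (w : Fin 2 × Fin 2 → ℂ),
      (∀ t, ip (S9 α β γ δ t) (fun p : Q4 => b p.2.1 * d p.2.2.2 * w (p.1, p.2.2.1)) = 0) →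
      (fun p : Q4 => b p.2.1 * d p.2.2.2 * w (p.1, p.2.2.1)) = 0) ∧
    (∀ (c d : Fin 2 → ℂ) (w : Fin 2 × Fin 2 → ℂ),
      (∀ t, ip (S9 α β γ δ t) (fun p : Q4 => c p.2.2.1 * d p.2.2.2 * w (p.1, p.2.1)) = 0) →
      (fun p : Q4 => c p.2.2.1 * d p.2.2.2 * w (p.1, p.2.1)) = 0) := by
  have key : ∀ t : ℝ, t ∈ Set.Ioo 0 (Real.pi / 2) →
      Ok (Real.cos t : ℂ) (Real.sin t : ℂ) := by
    intro t ht
    have h1 := Real.cos_pos_of_mem_Ioo ⟨by linarith [ht.1, Real.pi_pos], ht.2⟩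
    have h2 := Real.sin_pos_of_pos_of_lt_pi ht.1 (by linarith [ht.2, Real.pi_pos])
    refine ⟨by exact_mod_cast h1.ne', by exact_mod_cast h2.ne', ?_⟩
    exact_mod_cast Real.cos_sq_add_sin_sq t
  have ka := key α hα
  have kb := key β hβ
  have kc := key γ hγ
  have kd := key δ hδ
  have zer : ∀ x : Fin 2 → ℂ, (x 0 = 0 ∧ x 1 = 0) → ∀ i, x i = 0 := by
    intro x hx i
    fin_cases i
    · exact hx.1
    · exact hx.2
  refine ⟨?_, ?_, ?_, ?_, ?_, ?_⟩ <;> intro x y w h <;> by_cases hx : x 0 = 0 ∧ x 1 = 0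
  all_goals try (funext p; simp [zer x hx]; done)
  all_goals by_cases hy : y 0 = 0 ∧ y 1 = 0
  all_goals try (funext p; simp [zer y hy]; done)
  all_goals
    have g := fun t (X Y Z : ℂ) (hh : X * Y * Z = _) => or3 (hh.trans (h t))
    refine fin4 (w (0, 0)) (w (0, 1)) (w (1, 0)) (w (1, 1)) ?_ ?_
    · rintro ⟨w1, w2, w3, w4⟩
      funext ⟨i, j, k, l⟩
      fin_cases i <;> fin_cases j <;> fin_cases k <;> fin_cases l <;> simp [w1, w2, w3, w4]
  on_goal 6 =>
    refine core_cd _ _ _ _ _ _ _ _ _ _ _ _ _ _ _ _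
      ka kb (tri _ _ _ _ kc hx) (tri _ _ _ _ kd hy)
      (g 0 _ _ _ ?_) (g 1 _ _ _ ?_) (g 2 _ _ _ ?_) (g 3 _ _ _ ?_) (g 4 _ _ _ ?_)
      (g 5 _ _ _ ?_) (g 6 _ _ _ ?_) (g 7 _ _ _ ?_) (g 8 _ _ _ ?_)
  on_goal 5 =>
    refine core_bd _ _ _ _ _ _ _ _ _ _ _ _ _ _ _ _
      ka kc (tri _ _ _ _ kb hx) (tri _ _ _ _ kd hy)
      (g 0 _ _ _ ?_) (g 1 _ _ _ ?_) (g 2 _ _ _ ?_) (g 3 _ _ _ ?_) (g 4 _ _ _ ?_)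
      (g 5 _ _ _ ?_) (g 6 _ _ _ ?_) (g 7 _ _ _ ?_) (g 8 _ _ _ ?_)
  on_goal 4 =>
    refine core_bc _ _ _ _ _ _ _ _ _ _ _ _ _ _ _ _
      ka kd (tri _ _ _ _ kb hx) (tri _ _ _ _ kc hy)
      (g 0 _ _ _ ?_) (g 1 _ _ _ ?_) (g 2 _ _ _ ?_) (g 3 _ _ _ ?_) (g 4 _ _ _ ?_)
      (g 5 _ _ _ ?_) (g 6 _ _ _ ?_) (g 7 _ _ _ ?_) (g 8 _ _ _ ?_)
  on_goal 3 =>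
    refine core_ad _ _ _ _ _ _ _ _ _ _ _ _ _ _ _ _
      kb kc (tri _ _ _ _ ka hx) (tri _ _ _ _ kd hy)
      (g 0 _ _ _ ?_) (g 1 _ _ _ ?_) (g 2 _ _ _ ?_) (g 3 _ _ _ ?_) (g 4 _ _ _ ?_)
      (g 5 _ _ _ ?_) (g 6 _ _ _ ?_) (g 7 _ _ _ ?_) (g 8 _ _ _ ?_)
  on_goal 2 =>
    refine core_ac _ _ _ _ _ _ _ _ _ _ _ _ _ _ _ _
      kb kd (tri _ _ _ _ ka hx) (tri _ _ _ _ kc hy)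
      (g 0 _ _ _ ?_) (g 1 _ _ _ ?_) (g 2 _ _ _ ?_) (g 3 _ _ _ ?_) (g 4 _ _ _ ?_)
      (g 5 _ _ _ ?_) (g 6 _ _ _ ?_) (g 7 _ _ _ ?_) (g 8 _ _ _ ?_)
  on_goal 1 =>
    refine core_ab _ _ _ _ _ _ _ _ _ _ _ _ _ _ _ _
      kc kd (tri _ _ _ _ ka hx) (tri _ _ _ _ kb hy)
      (g 0 _ _ _ ?_) (g 1 _ _ _ ?_) (g 2 _ _ _ ?_) (g 3 _ _ _ ?_) (g 4 _ _ _ ?_)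
      (g 5 _ _ _ ?_) (g 6 _ _ _ ?_) (g 7 _ _ _ ?_) (g 8 _ _ _ ?_)
  all_goals
    simp [ip, S9, pv, ket0, ket1, vk, vk', Fintype.sum_prod_type, Fin.sum_univ_two,
      -mul_eq_mul_left_iff, -mul_eq_mul_right_iff, -Complex.ofReal_cos, -Complex.ofReal_sin]
    try ring
end

section
/- For all α, β, γ, δ ∈ (0, π/2): every 6-element subset of the nine AB-part vectors u₁ = |0,0⟩, u₂ = |0,1⟩, u₃ = |0,b⟩, u₄ = |1,1⟩, u₅ = |1,b⟩, u₆ = |1,0⟩, u₇ = |a,0⟩, u₈ = |a,1⟩, u₉ = |a',b'⟩ spans the whole space Fin 2 × Fin 2 → ℂ (≅ ℂ⁴); likewise every 6-element subset of the nine CD-part vectors |1,d⟩, |c,0⟩, |0,1⟩, |0,d⟩, |1,0⟩, |c,1⟩, |0,0⟩, |1,1⟩, |c',d'⟩ spans Fin 2 × Fin 2 → ℂ. -/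
/-- The two-qubit product vector `|x,y⟩` in `ℂ⁴`. -/
def pv2 (x y : Fin 2 → ℂ) : Fin 2 × Fin 2 → ℂ := fun p => x p.1 * y p.2

/-- The `AB`-parts of the nine members of the size-9 UPB `S₉`. -/
noncomputable def uAB (α β : ℝ) : Fin 9 → Fin 2 × Fin 2 → ℂ :=
  ![pv2 ket0 ket0, pv2 ket0 ket1, pv2 ket0 (vk β),
    pv2 ket1 ket1, pv2 ket1 (vk β), pv2 ket1 ket0,
    pv2 (vk α) ket0, pv2 (vk α) ket1, pv2 (vk' α) (vk' β)]

/-- The `CD`-parts of the nine members of the size-9 UPB `S₉`. -/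
noncomputable def uCD (γ δ : ℝ) : Fin 9 → Fin 2 × Fin 2 → ℂ :=
  ![pv2 ket1 (vk δ), pv2 (vk γ) ket0, pv2 ket0 ket1,
    pv2 ket0 (vk δ), pv2 ket1 ket0, pv2 (vk γ) ket1,
    pv2 ket0 ket0, pv2 ket1 ket1, pv2 (vk' γ) (vk' δ)]

set_option synthInstance.maxHeartbeats 400000 in
set_option synthInstance.maxSize 2000 in
set_option maxRecDepth 10000 in
/-- Combinatorial core: no set of at least six indices is closed under the four lines,
fails to contain all basis vectors, and is compatible with the ninth vector. -/
lemma comb_core : ∀ Z : Finset (Fin 9), 6 ≤ Z.card →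
    (0 ∈ Z → 1 ∈ Z → 2 ∈ Z) → (0 ∈ Z → 2 ∈ Z → 1 ∈ Z) → (1 ∈ Z → 2 ∈ Z → 0 ∈ Z) →
    (3 ∈ Z → 4 ∈ Z → 5 ∈ Z) → (5 ∈ Z → 4 ∈ Z → 3 ∈ Z) →
    (0 ∈ Z → 6 ∈ Z → 5 ∈ Z) → (5 ∈ Z → 6 ∈ Z → 0 ∈ Z) →
    (1 ∈ Z → 7 ∈ Z → 3 ∈ Z) → (3 ∈ Z → 7 ∈ Z → 1 ∈ Z) →
    (0 ∈ Z → 1 ∈ Z → 5 ∈ Z → 8 ∈ Z → 3 ∈ Z) →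
    (0 ∈ Z → 1 ∈ Z → 3 ∈ Z → 8 ∈ Z → 5 ∈ Z) →
    (0 ∈ Z → 3 ∈ Z → 5 ∈ Z → 8 ∈ Z → 1 ∈ Z) →
    (1 ∈ Z → 3 ∈ Z → 5 ∈ Z → 8 ∈ Z → 0 ∈ Z) →
    0 ∈ Z ∧ 1 ∈ Z ∧ 3 ∈ Z ∧ 5 ∈ Z := by
  decide +kernel

lemma pv2_eq (x y : Fin 2 → ℂ) : pv2 x y =
    (x 0 * y 0) • pv2 ket0 ket0 + (x 0 * y 1) • pv2 ket0 ket1 +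
    (x 1 * y 0) • pv2 ket1 ket0 + (x 1 * y 1) • pv2 ket1 ket1 := by
  ext ⟨i, j⟩
  fin_cases i <;> fin_cases j <;> simp [pv2, ket0, ket1]

lemma vec_eq (v : Fin 2 × Fin 2 → ℂ) : v =
    v (0, 0) • pv2 ket0 ket0 + v (0, 1) • pv2 ket0 ket1 +
    v (1, 0) • pv2 ket1 ket0 + v (1, 1) • pv2 ket1 ket1 := by
  ext ⟨i, j⟩
  fin_cases i <;> fin_cases j <;> simp [pv2, ket0, ket1]

lemma trig_ne {t : ℝ} (ht : t ∈ Set.Ioo 0 (Real.pi / 2)) :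
    ((Real.cos t : ℝ) : ℂ) ≠ 0 ∧ ((Real.sin t : ℝ) : ℂ) ≠ 0 := by
  obtain ⟨h0, h1⟩ := ht
  constructor
  · exact_mod_cast (Real.cos_pos_of_mem_Ioo ⟨by linarith, h1⟩).ne'
  · exact_mod_cast (Real.sin_pos_of_pos_of_lt_pi h0 (by linarith [Real.pi_pos])).ne'

lemma spanAB (α β : ℝ) (hα : α ∈ Set.Ioo 0 (Real.pi / 2))
    (hβ : β ∈ Set.Ioo 0 (Real.pi / 2)) (s : Finset (Fin 9)) (hs : s.card = 6) :
    Submodule.span ℂ (uAB α β '' (s : Set (Fin 9))) = ⊤ := by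
  classical
  by_contra hne
  obtain ⟨f, hf0, hf⟩ := Submodule.exists_le_ker_of_lt_top _ (lt_top_iff_ne_top.mpr hne)
  obtain ⟨hca, hsa⟩ := trig_ne hα
  obtain ⟨hcb, hsb⟩ := trig_ne hβ
  have hfs : ∀ i ∈ s, f (uAB α β i) = 0 := fun i hi =>
    hf (Submodule.subset_span ⟨i, hi, rfl⟩)
  set Z : Finset (Fin 9) := Finset.univ.filter (fun i => f (uAB α β i) = 0) with hZ
  have hsub : s ⊆ Z := fun i hi => by simp [hZ, hfs i hi]
  have hcard : 6 ≤ Z.card := hs ▸ Finset.card_le_card hsub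
  have key := comb_core Z hcard
  have hmem : ∀ i, i ∈ Z ↔ f (uAB α β i) = 0 := fun i => by simp [hZ]
  generalize hp : f (pv2 ket0 ket0) = p
  generalize hq : f (pv2 ket0 ket1) = q
  generalize hr : f (pv2 ket1 ket0) = r
  generalize ht : f (pv2 ket1 ket1) = t
  have hv : ∀ x y : Fin 2 → ℂ, f (pv2 x y) =
      (x 0 * y 0) * p + (x 0 * y 1) * q + (x 1 * y 0) * r + (x 1 * y 1) * t := by
    intro x y
    rw [pv2_eq]
    simp only [map_add, map_smul, hp, hq, hr, ht, smul_eq_mul]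
  have m0 : 0 ∈ Z ↔ p = 0 := by rw [hmem, ← hp]; rfl
  have m1 : 1 ∈ Z ↔ q = 0 := by rw [hmem, ← hq]; rfl
  have m3 : 3 ∈ Z ↔ t = 0 := by rw [hmem, ← ht]; rfl
  have m5 : 5 ∈ Z ↔ r = 0 := by rw [hmem, ← hr]; rfl
  have m2 : 2 ∈ Z ↔ Real.cos β * p + Real.sin β * q = 0 := by
    rw [hmem, show uAB α β 2 = pv2 ket0 (vk β) from rfl, hv]
    simp [ket0, vk]
  have m4 : 4 ∈ Z ↔ Real.cos β * r + Real.sin β * t = 0 := by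
    rw [hmem, show uAB α β 4 = pv2 ket1 (vk β) from rfl, hv]
    simp [ket1, vk]
  have m6 : 6 ∈ Z ↔ Real.cos α * p + Real.sin α * r = 0 := by
    rw [hmem, show uAB α β 6 = pv2 (vk α) ket0 from rfl, hv]
    simp [ket0, vk]
  have m7 : 7 ∈ Z ↔ Real.cos α * q + Real.sin α * t = 0 := by
    rw [hmem, show uAB α β 7 = pv2 (vk α) ket1 from rfl, hv]
    simp [ket1, vk]
  have m8 : 8 ∈ Z ↔ Real.sin α * Real.sin β * p + -(Real.sin α * Real.cos β * q) +
      -(Real.cos α * Real.sin β * r) + Real.cos α * Real.cos β * t = 0 := by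
    rw [hmem, show uAB α β 8 = pv2 (vk' α) (vk' β) from rfl, hv]
    simp [vk']
  rw [m0, m1, m2, m3, m4, m5, m6, m7, m8] at key
  have fin : p = 0 ∧ q = 0 ∧ t = 0 ∧ r = 0 := by
    clear hmem hv m0 m1 m2 m3 m4 m5 m6 m7 m8 hp hq hr ht hf hf0 hfs hsub hcard hne
    clear_value Z
    clear hs hα hβ
    generalize ((Real.cos α : ℝ) : ℂ) = ca at *
    generalize ((Real.sin α : ℝ) : ℂ) = sa at *
    generalize ((Real.cos β : ℝ) : ℂ) = cb at *
    generalize ((Real.sin β : ℝ) : ℂ) = sb at *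
    apply key <;> clear key <;> intros <;> simp_all
  obtain ⟨h1, h2, h3, h4⟩ := fin
  apply hf0
  refine LinearMap.ext fun v => ?_
  rw [vec_eq v]
  simp [hp, hq, hr, ht, h1, h2, h3, h4]

/-- The `CD`-parts are a permutation of the `AB`-parts. -/
lemma uCD_eq (γ δ : ℝ) (i : Fin 9) :
    uCD γ δ i = uAB γ δ ((![4, 6, 1, 2, 5, 7, 0, 3, 8] : Fin 9 → Fin 9) i) := by
  fin_cases i <;> simp [uCD, uAB]

/-- Every 6-element subset of the nine `AB`-part vectors of `S₉` spans `ℂ⁴`,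
and likewise every 6-element subset of the nine `CD`-part vectors spans `ℂ⁴`. -/
theorem stmt12 (α β γ δ : ℝ) (hα : α ∈ Set.Ioo 0 (Real.pi / 2))
    (hβ : β ∈ Set.Ioo 0 (Real.pi / 2)) (hγ : γ ∈ Set.Ioo 0 (Real.pi / 2))
    (hδ : δ ∈ Set.Ioo 0 (Real.pi / 2)) :
    (∀ s : Finset (Fin 9), s.card = 6 →
      Submodule.span ℂ (uAB α β '' (s : Set (Fin 9))) = ⊤) ∧
    (∀ s : Finset (Fin 9), s.card = 6 →
      Submodule.span ℂ (uCD γ δ '' (s : Set (Fin 9))) = ⊤) := by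
  refine ⟨spanAB α β hα hβ, fun s hs => ?_⟩
  have hinj : Function.Injective (![4, 6, 1, 2, 5, 7, 0, 3, 8] : Fin 9 → Fin 9) := by decide
  have h := spanAB γ δ hγ hδ (s.image ![4, 6, 1, 2, 5, 7, 0, 3, 8])
    (by rw [Finset.card_image_of_injective _ hinj, hs])
  rw [Finset.coe_image, Set.image_image] at h
  simpa only [← uCD_eq] using h
end

section
/- For all real α, β, γ, δ, the 8×8 real matrix U defined below is orthogonal: U · Uᵀ = 1 (equivalently, U is unitary). -/
open Real

/-- The `8 × 8` real matrix `U` built from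
`x₁ = sin β sin γ sin δ`, `x₂ = cos α cos γ sin δ`, `x₃ = cos α sin β cos δ`,
`x₄ = cos α cos β sin γ`, `x₅ = cos β cos γ cos δ`, `x₆ = sin α sin γ cos δ`,
`x₇ = sin α cos β sin δ`, `x₈ = sin α sin β cos γ`. -/
noncomputable def U8 (α β γ δ : ℝ) : Matrix (Fin 8) (Fin 8) ℝ :=
  let x1 := sin β * sin γ * sin δ
  let x2 := cos α * cos γ * sin δ
  let x3 := cos α * sin β * cos δ
  let x4 := cos α * cos β * sin γ
  let x5 := cos β * cos γ * cos δ
  let x6 := sin α * sin γ * cos δ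
  let x7 := sin α * cos β * sin δ
  let x8 := sin α * sin β * cos γ
  !![x1,  x2,  x3,  x4,  -x5, -x6, -x7, -x8;
     x2,  -x1, -x4, x3,  x6,  -x5, -x8, x7;
     x3,  x4,  -x1, -x2, x7,  x8,  -x5, -x6;
     x4,  -x3, x2,  -x1, x8,  -x7, x6,  -x5;
     -x5, -x6, -x7, -x8, -x1, -x2, -x3, -x4;
     -x6, x5,  -x8, x7,  x2,  -x1, x4,  -x3;
     x7,  -x8, -x5, x6,  -x3, x4,  x1,  -x2;
     x8,  x7,  -x6, -x5, -x4, -x3, x2,  x1]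

theorem U8_row_norm (α β γ δ : ℝ) :
    (sin β * sin γ * sin δ) ^ 2 + (cos α * cos γ * sin δ) ^ 2 + (cos α * sin β * cos δ) ^ 2
    + (cos α * cos β * sin γ) ^ 2 + (cos β * cos γ * cos δ) ^ 2 + (sin α * sin γ * cos δ) ^ 2
    + (sin α * cos β * sin δ) ^ 2 + (sin α * sin β * cos γ) ^ 2 = 1 := by
  simp only [mul_pow, sin_sq]
  ring

/-- For all real `α, β, γ, δ` the matrix `U8 α β γ δ` is orthogonal: `U Uᵀ = 1`. -/
theorem stmt13 (α β γ δ : ℝ) : U8 α β γ δ * (U8 α β γ δ).transpose = 1 := by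
  have h := U8_row_norm α β γ δ
  unfold U8
  generalize sin β * sin γ * sin δ = x1 at *
  generalize cos α * cos γ * sin δ = x2 at *
  generalize cos α * sin β * cos δ = x3 at *
  generalize cos α * cos β * sin γ = x4 at *
  generalize cos β * cos γ * cos δ = x5 at *
  generalize sin α * sin γ * cos δ = x6 at *
  generalize sin α * cos β * sin δ = x7 at *
  generalize sin α * sin β * cos γ = x8 at *
  ext i j
  fin_cases i <;> fin_cases j <;>
    simp [Matrix.mul_apply, Fin.sum_univ_succ] <;>
    first
      | ring1
      | linear_combination h
end

section
/- For all α, β, γ, δ ∈ (0, π/2) and every subset S of the four qubit positions {A,B,C,D}, the partial transpose ρ^{T_S} of ρ on the positions in S — the matrix obtained from ρ by interchanging the row coordinate and the column coordinate at every position in S, e.g. for S = {C,D}: ρ^{T_{CD}}[(i,j,k,l),(i',j',k',l')] := ρ[(i,j,k',l'),(i',j',k,l)] — is positive semidefinite. In particular ρ is a PPT state for the AB:CD bipartition and for every bipartition of the four qubits. -/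
open scoped ComplexOrder

/-- The 4-qubit state `ρ := (1/7)(1 − Σ_{v ∈ S₉} vv*)`, a `16 × 16` complex matrix. -/
noncomputable def rho (α β γ δ : ℝ) : Matrix Q4 Q4 ℂ :=
  (1 / 7 : ℂ) •
    ((1 : Matrix Q4 Q4 ℂ) -
      ∑ t : Fin 9, Matrix.of fun x y : Q4 => S9 α β γ δ t x * (starRingEnd ℂ) (S9 α β γ δ t y))

/-- The index swap defining the partial transpose on the set `s` of qubit positions:
position `i` of the pair `(x, y)` is swapped whenever `s i = true`. -/
def ptIdx (s : Fin 4 → Bool) (x y : Q4) : Q4 :=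
  (if s 0 then y.1 else x.1, if s 1 then y.2.1 else x.2.1,
   if s 2 then y.2.2.1 else x.2.2.1, if s 3 then y.2.2.2 else x.2.2.2)

/-- The partial transpose of a 4-qubit matrix on the set `s` of qubit positions. -/
noncomputable def pt (s : Fin 4 → Bool) (M : Matrix Q4 Q4 ℂ) : Matrix Q4 Q4 ℂ :=
  Matrix.of fun x y : Q4 => M (ptIdx s x y) (ptIdx s y x)

/-- The local factors of the vectors in `S9`. -/
noncomputable def fac (α β γ δ : ℝ) : Fin 9 → Fin 4 → Fin 2 → ℂ :=
  ![![ket0, ket0, ket1, vk δ],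
    ![ket0, ket1, vk γ, ket0],
    ![ket0, vk β, ket0, ket1],
    ![ket1, ket1, ket0, vk δ],
    ![ket1, vk β, ket1, ket0],
    ![ket1, ket0, vk γ, ket1],
    ![vk α, ket0, ket0, ket0],
    ![vk α, ket1, ket1, ket1],
    ![vk' α, vk' β, vk' γ, vk' δ]]

theorem S9_eq (α β γ δ : ℝ) (t : Fin 9) :
    S9 α β γ δ t = pv (fac α β γ δ t 0) (fac α β γ δ t 1) (fac α β γ δ t 2)
      (fac α β γ δ t 3) := by
  fin_cases t <;> rfl

theorem conj_fac (α β γ δ : ℝ) (t : Fin 9) (i : Fin 4) (j : Fin 2) :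
    (starRingEnd ℂ) (fac α β γ δ t i j) = fac α β γ δ t i j := by
  fin_cases t <;> fin_cases i <;> fin_cases j <;>
    simp [fac, ket0, ket1, vk, vk', -Complex.ofReal_cos, -Complex.ofReal_sin]

theorem conj_S9 (α β γ δ : ℝ) (t : Fin 9) (x : Q4) :
    (starRingEnd ℂ) (S9 α β γ δ t x) = S9 α β γ δ t x := by
  simp [S9_eq, pv, conj_fac]

theorem sum_pv (x y z w x' y' z' w' : Fin 2 → ℂ) :
    ∑ p, pv x y z w p * pv x' y' z' w' p =
      (x 0 * x' 0 + x 1 * x' 1) * (y 0 * y' 0 + y 1 * y' 1) *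
      (z 0 * z' 0 + z 1 * z' 1) * (w 0 * w' 0 + w 1 * w' 1) := by
  simp only [Fintype.sum_prod_type, Fin.sum_univ_two, pv]
  ring

theorem unit_vec (t : ℝ) :
    (Real.cos t : ℂ) * (Real.cos t : ℂ) + (Real.sin t : ℂ) * (Real.sin t : ℂ) = 1 := by
  norm_cast
  nlinarith [Real.sin_sq_add_cos_sq t]

theorem unit_vec' (t : ℝ) :
    (Real.sin t : ℂ) * (Real.sin t : ℂ) + (Real.cos t : ℂ) * (Real.cos t : ℂ) = 1 := by
  rw [add_comm, unit_vec]

theorem orth_vec (t : ℝ) :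
    -((Real.sin t : ℂ) * (Real.cos t : ℂ)) + (Real.cos t : ℂ) * (Real.sin t : ℂ) = 0 := by
  ring

theorem orth_vec1 (t : ℝ) :
    (Real.cos t : ℂ) * (Real.sin t : ℂ) + -((Real.sin t : ℂ) * (Real.cos t : ℂ)) = 0 := by
  ring

theorem orth_vec2 (t : ℝ) :
    (Real.sin t : ℂ) * (Real.cos t : ℂ) + -((Real.cos t : ℂ) * (Real.sin t : ℂ)) = 0 := by
  ring

theorem gram (α β γ δ : ℝ) (t u : Fin 9) :
    ∑ p, S9 α β γ δ t p * S9 α β γ δ u p = if t = u then 1 else 0 := by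
  simp only [S9_eq, sum_pv]
  fin_cases t <;> fin_cases u <;>
    simp [fac, ket0, ket1, vk, vk', -Complex.ofReal_cos, -Complex.ofReal_sin,
      unit_vec, unit_vec', orth_vec1, orth_vec2]

/-- The matrix whose columns are the vectors of `S9`. -/
noncomputable def colMat (α β γ δ : ℝ) : Matrix Q4 (Fin 9) ℂ :=
  Matrix.of fun x t => S9 α β γ δ t x

theorem rho_eq (α β γ δ : ℝ) :
    rho α β γ δ = (1 / 7 : ℂ) • (1 - colMat α β γ δ * (colMat α β γ δ).conjTranspose) := by
  ext x y
  simp [rho, Matrix.sum_apply, Matrix.mul_apply, colMat]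

theorem colMat_isom (α β γ δ : ℝ) :
    (colMat α β γ δ).conjTranspose * colMat α β γ δ = 1 := by
  ext t u
  simp only [Matrix.mul_apply, Matrix.conjTranspose_apply, colMat, Matrix.of_apply,
    ← starRingEnd_apply, conj_S9, gram, Matrix.one_apply]

theorem rho_posSemidef (α β γ δ : ℝ) : (rho α β γ δ).PosSemidef := by
  rw [rho_eq]
  set V := colMat α β γ δ with hV
  have h : (1 - V * V.conjTranspose) =
      (1 - V * V.conjTranspose).conjTranspose * (1 - V * V.conjTranspose) := by
    have h2 : V * V.conjTranspose * (V * V.conjTranspose) = V * V.conjTranspose := by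
      rw [Matrix.mul_assoc, ← Matrix.mul_assoc V.conjTranspose, colMat_isom, Matrix.one_mul]
    simp only [Matrix.conjTranspose_sub, Matrix.conjTranspose_one, Matrix.conjTranspose_mul,
      Matrix.conjTranspose_conjTranspose, Matrix.sub_mul, Matrix.mul_sub, Matrix.one_mul,
      Matrix.mul_one, h2]
    simp
  rw [h]
  refine (Matrix.posSemidef_conjTranspose_mul_self _).smul ?_
  rw [Complex.le_def]
  norm_num

theorem ptIdx_eq_iff (s : Fin 4 → Bool) (x y : Q4) : ptIdx s x y = ptIdx s y x ↔ x = y := by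
  obtain ⟨a, b, c, d⟩ := x
  obtain ⟨a', b', c', d'⟩ := y
  simp only [ptIdx, Prod.mk.injEq]
  cases s 0 <;> cases s 1 <;> cases s 2 <;> cases s 3 <;> simp [eq_comm]

theorem pt_rho (α β γ δ : ℝ) (s : Fin 4 → Bool) : pt s (rho α β γ δ) = rho α β γ δ := by
  ext x y
  have h : ∀ t, S9 α β γ δ t (ptIdx s x y) * S9 α β γ δ t (ptIdx s y x) =
      S9 α β γ δ t x * S9 α β γ δ t y := by
    intro t
    simp only [S9_eq, pv, ptIdx]
    cases s 0 <;> cases s 1 <;> cases s 2 <;> cases s 3 <;> simp <;> ring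
  simp only [pt, rho, Matrix.of_apply, Matrix.smul_apply, Matrix.sub_apply, Matrix.sum_apply,
    conj_S9, h, Matrix.one_apply, ptIdx_eq_iff]

/-- For every subset `s` of the four qubit positions the partial transpose of `ρ`
on `s` is positive semidefinite; in particular `ρ` is PPT for every bipartition
of the four qubits. -/
theorem stmt15 (α β γ δ : ℝ) (hα : α ∈ Set.Ioo 0 (Real.pi / 2))
    (hβ : β ∈ Set.Ioo 0 (Real.pi / 2)) (hγ : γ ∈ Set.Ioo 0 (Real.pi / 2))
    (hδ : δ ∈ Set.Ioo 0 (Real.pi / 2)) :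
    ∀ s : Fin 4 → Bool, (pt s (rho α β γ δ)).PosSemidef := by
  intro s
  rw [pt_rho]
  exact rho_posSemidef α β γ δ
end

section
/- For all α, β, γ, δ ∈ (0, π/2), the range of ρ contains no nonzero AB:CD product vector: if v (i,j,k,l) = u (i,j) · w (k,l) for some u, w : Fin 2 × Fin 2 → ℂ and v = ρ · x for some x ∈ V (matrix–vector product), then v = 0. -/
/-- The nine vectors are orthonormal. -/
lemma S9_orth (α β γ δ : ℝ) (s t : Fin 9) :
    ip (S9 α β γ δ s) (S9 α β γ δ t) = if s = t then 1 else 0 := by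
  have ha : (Complex.cos α) ^ 2 = 1 - (Complex.sin α) ^ 2 := Complex.cos_sq' _
  have hb : (Complex.cos β) ^ 2 = 1 - (Complex.sin β) ^ 2 := Complex.cos_sq' _
  have hc : (Complex.cos γ) ^ 2 = 1 - (Complex.sin γ) ^ 2 := Complex.cos_sq' _
  have hd : (Complex.cos δ) ^ 2 = 1 - (Complex.sin δ) ^ 2 := Complex.cos_sq' _
  fin_cases s <;> fin_cases t <;>
    simp [ip, S9, pv, ket0, ket1, vk, vk', Fintype.sum_prod_type, ← Complex.cos_conj,
      ← Complex.sin_conj] <;> ring_nf <;> (try simp only [ha, hb, hc, hd]) <;> (try ring_nf)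

lemma ip_rho (α β γ δ : ℝ) (x : Q4 → ℂ) (s : Fin 9) :
    ip (S9 α β γ δ s) ((rho α β γ δ).mulVec x) = 0 := by
  have h : (rho α β γ δ).mulVec x = fun p => (1 / 7 : ℂ) *
      (x p - ∑ t : Fin 9, S9 α β γ δ t p * ip (S9 α β γ δ t) x) := by
    funext p
    simp only [rho, Matrix.smul_mulVec, Matrix.sub_mulVec, Matrix.one_mulVec, Matrix.sum_mulVec,
      Pi.smul_apply, Pi.sub_apply, smul_eq_mul, Finset.sum_apply]
    congr 2
    apply Finset.sum_congr rfl
    intro t _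
    simp only [Matrix.mulVec, dotProduct, Matrix.of_apply, ip, Finset.mul_sum, mul_assoc]
  have h2 : ip (S9 α β γ δ s) (fun p => (1 / 7 : ℂ) *
      (x p - ∑ t : Fin 9, S9 α β γ δ t p * ip (S9 α β γ δ t) x)) = (1 / 7 : ℂ) *
      (ip (S9 α β γ δ s) x -
        ∑ t : Fin 9, ip (S9 α β γ δ s) (S9 α β γ δ t) * ip (S9 α β γ δ t) x) := by
    generalize hy : (fun t => ip (S9 α β γ δ t) x) = y
    have hy' : ∀ t, ip (S9 α β γ δ t) x = y t := fun t => by rw [← hy]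
    rw [hy' s, ← hy' s]
    simp only [hy']
    rw [← hy' s]
    simp only [ip, mul_sub, Finset.mul_sum, Finset.sum_sub_distrib, Finset.sum_mul]
    congr 1
    · exact Finset.sum_congr rfl fun p _ => by ring
    · rw [Finset.sum_comm]
      exact Finset.sum_congr rfl fun p _ => Finset.sum_congr rfl fun t _ => by ring
  rw [h, h2]
  simp [S9_orth]

/-- The algebraic core: the nine bilinear equations force `u = 0` or `w = 0`. -/
lemma core (a a' b b' c c' d d' u0 u1 u2 u3 w0 w1 w2 w3 : ℂ)
    (ha : a ≠ 0) (ha' : a' ≠ 0) (hb : b ≠ 0) (hb' : b' ≠ 0) (hc : c ≠ 0) (hc' : c' ≠ 0)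
    (hd : d ≠ 0) (hd' : d' ≠ 0)
    (na : a ^ 2 + a' ^ 2 = 1) (nb : b ^ 2 + b' ^ 2 = 1) (nc : c ^ 2 + c' ^ 2 = 1)
    (nd : d ^ 2 + d' ^ 2 = 1)
    (h1 : u0 = 0 ∨ d * w2 + d' * w3 = 0)
    (h2 : u1 = 0 ∨ c * w0 + c' * w2 = 0)
    (h3 : b * u0 + b' * u1 = 0 ∨ w1 = 0)
    (h4 : u3 = 0 ∨ d * w0 + d' * w1 = 0)
    (h5 : b * u2 + b' * u3 = 0 ∨ w2 = 0)
    (h6 : u2 = 0 ∨ c * w1 + c' * w3 = 0)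
    (h7 : a * u0 + a' * u2 = 0 ∨ w0 = 0)
    (h8 : a * u1 + a' * u3 = 0 ∨ w3 = 0)
    (h9 : a' * b' * u0 - a' * b * u1 - a * b' * u2 + a * b * u3 = 0 ∨
      c' * d' * w0 - c' * d * w1 - c * d' * w2 + c * d * w3 = 0) :
    (u0 = 0 ∧ u1 = 0 ∧ u2 = 0 ∧ u3 = 0) ∨ (w0 = 0 ∧ w1 = 0 ∧ w2 = 0 ∧ w3 = 0) := by
  have key : ∀ p p' q q' x0 x1 x2 x3 : ℂ, p ≠ 0 → q ≠ 0 → p ^ 2 + p' ^ 2 = 1 →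
      q ^ 2 + q' ^ 2 = 1 → p * x0 + p' * x2 = 0 → p * x1 + p' * x3 = 0 → q * x2 + q' * x3 = 0 →
      p' * q' * x0 - p' * q * x1 - p * q' * x2 + p * q * x3 = 0 → x3 = 0 := by
    intro p p' q q' x0 x1 x2 x3 hp hq np nq e1 e2 e3 e4
    linear_combination (p * q) * e4 - p' * q' * q * e1 + p' * q ^ 2 * e2 +
      (p' ^ 2 * q' + p ^ 2 * q') * e3 - x3 * (q ^ 2 + q' ^ 2) * np - x3 * nq
  have it : ∀ p q x y : ℂ, p ≠ 0 → q ≠ 0 → p * x + q * y = 0 → (x = 0 ↔ y = 0) := by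
    intro p q x y hp hq h
    constructor
    · rintro rfl
      simpa [hq] using h
    · rintro rfl
      simpa [hp] using h
  have k1 := h1.imp_right (it _ _ _ _ hd hd')
  have k2 := h2.imp_right (it _ _ _ _ hc hc')
  have k3 := h3.imp_left (it _ _ _ _ hb hb')
  have k4 := h4.imp_right (it _ _ _ _ hd hd')
  have k5 := h5.imp_left (it _ _ _ _ hb hb')
  have k6 := h6.imp_right (it _ _ _ _ hc hc')
  have k7 := h7.imp_left (it _ _ _ _ ha ha')
  have k8 := h8.imp_left (it _ _ _ _ ha ha')
  have two : ∀ p q x y : ℂ, p ^ 2 + q ^ 2 = 1 → p * x + q * y = 0 → q * x - p * y = 0 →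
      x = 0 := by
    intro p q x y n e1 e2
    linear_combination p * e1 + q * e2 - x * n
  clear it
  by_cases z0 : u0 = 0 <;> by_cases z1 : u1 = 0 <;> by_cases z2 : u2 = 0 <;>
    by_cases z3 : u3 = 0 <;> by_cases y0 : w0 = 0 <;> by_cases y1 : w1 = 0 <;>
    by_cases y2 : w2 = 0 <;> by_cases y3 : w3 = 0 <;>
    simp only [z0, z1, z2, z3, y0, y1, y2, y3, true_or, or_true, and_true, and_self, iff_true,
      iff_false, not_true, not_false_eq_true, or_false, false_or, or_self, true_iff,
      false_iff, and_false] at k1 k2 k3 k4 k5 k6 k7 k8 ⊢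
  all_goals clear k1 k2 k3 k4 k5 k6 k7 k8
  all_goals
    simp only [z0, z1, z2, z3, y0, y1, y2, y3, true_or, or_true, or_false, false_or, mul_zero,
      add_zero, zero_add, sub_zero, zero_sub, neg_eq_zero, mul_eq_zero, ha, ha', hb, hb', hc, hc',
      hd, hd'] at h1 h2 h3 h4 h5 h6 h7 h8 h9
  all_goals first
    | (rcases h9 with h9 | h9
       · exact z3 (key a a' b b' u0 u1 u2 u3 ha hb na nb h7 h8 h5 h9)
       · exact y3 (key c c' d d' w0 w1 w2 w3 hc hd nc nd h2 h6 h1 h9))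
    | (clear key; grind)

/-- The range of `ρ` contains no nonzero `AB:CD` product vector: if `v` is an
`AB:CD` product vector and `v = ρ x` for some `x`, then `v = 0`. -/
theorem stmt16 (α β γ δ : ℝ) (hα : α ∈ Set.Ioo 0 (Real.pi / 2))
    (hβ : β ∈ Set.Ioo 0 (Real.pi / 2)) (hγ : γ ∈ Set.Ioo 0 (Real.pi / 2))
    (hδ : δ ∈ Set.Ioo 0 (Real.pi / 2)) (v : Q4 → ℂ)
    (hprod : ∃ u w : Fin 2 × Fin 2 → ℂ,
      v = fun p : Q4 => u (p.1, p.2.1) * w (p.2.2.1, p.2.2.2))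
    (hrange : ∃ x : Q4 → ℂ, v = (rho α β γ δ).mulVec x) :
    v = 0 := by
  obtain ⟨u, w, hv⟩ := hprod
  obtain ⟨x, hx⟩ := hrange
  have H : ∀ s, ip (S9 α β γ δ s) v = 0 := fun s => by rw [hx]; exact ip_rho α β γ δ x s
  have hcos : ∀ t : ℝ, t ∈ Set.Ioo 0 (Real.pi / 2) → Complex.cos t ≠ 0 := by
    intro t ht
    have := (Real.cos_pos_of_mem_Ioo ⟨by linarith [ht.1, Real.pi_pos], ht.2⟩).ne'
    exact_mod_cast this
  have hsin : ∀ t : ℝ, t ∈ Set.Ioo 0 (Real.pi / 2) → Complex.sin t ≠ 0 := by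
    intro t ht
    have := (Real.sin_pos_of_pos_of_lt_pi ht.1 (by linarith [ht.2, Real.pi_pos])).ne'
    exact_mod_cast this
  have hn : ∀ t : ℝ, Complex.cos t ^ 2 + Complex.sin t ^ 2 = 1 := fun t => by
    rw [add_comm]; exact Complex.sin_sq_add_cos_sq _
  have H0 := H 0
  have H1 := H 1
  have H2 := H 2
  have H3 := H 3
  have H4 := H 4
  have H5 := H 5
  have H6 := H 6
  have H7 := H 7
  have H8 := H 8
  simp [hv, ip, S9, pv, ket0, ket1, vk, vk', Fintype.sum_prod_type, ← Complex.cos_conj,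
      ← Complex.sin_conj] at H0 H1 H2 H3 H4 H5 H6 H7 H8
  have := core _ _ _ _ _ _ _ _ (u (0, 0)) (u (0, 1)) (u (1, 0)) (u (1, 1))
    (w (0, 0)) (w (0, 1)) (w (1, 0)) (w (1, 1))
    (hcos α hα) (hsin α hα) (hcos β hβ) (hsin β hβ) (hcos γ hγ) (hsin γ hγ) (hcos δ hδ) (hsin δ hδ)
    (hn α) (hn β) (hn γ) (hn δ)
    (mul_eq_zero.1 (by linear_combination H0)) (mul_eq_zero.1 (by linear_combination H1))
    (mul_eq_zero.1 (by linear_combination H2)) (mul_eq_zero.1 (by linear_combination H3))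
    (mul_eq_zero.1 (by linear_combination H4)) (mul_eq_zero.1 (by linear_combination H5))
    (mul_eq_zero.1 (by linear_combination H6)) (mul_eq_zero.1 (by linear_combination H7))
    (mul_eq_zero.1 (by linear_combination H8))
  rw [hv]
  funext ⟨i, j, k, l⟩
  rcases this with ⟨h0, h1, h2, h3⟩ | ⟨h0, h1, h2, h3⟩
  · fin_cases i <;> fin_cases j <;> simp [h0, h1, h2, h3]
  · fin_cases k <;> fin_cases l <;> simp [h0, h1, h2, h3]
end

section
/- For all α, β, γ, δ ∈ (0, π/2), the state ρ is entangled (not separable) across the AB:CD bipartition: there do not exist a natural number n, nonnegative reals p₁,…,p_n, and vectors u_t, w_t : Fin 2 × Fin 2 → ℂ (t = 1,…,n) such that ρ = Σ_t p_t · P_t, where P_t is the rank-one matrix of the product vector v_t (i,j,k,l) := u_t (i,j) · w_t (k,l), i.e. P_t (x,y) = v_t x · conj(v_t y). Consequently ρ is also entangled across the A:B:CD grouping and as a 4-qubit state. -/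
/-- The rank-one matrix `vv*` of a vector `v`. -/
noncomputable def rankOne (v : Q4 → ℂ) : Matrix Q4 Q4 ℂ :=
  Matrix.of fun x y : Q4 => v x * (starRingEnd ℂ) (v y)

/-- Weighted sums that cannot vanish for the admissible support patterns. -/
lemma weight_ne (x1 x2 x3 x4 p1 p2 p3 p4 : ℂ)
    (hp1 : p1 ≠ 0) (hp2 : p2 ≠ 0) (hp3 : p3 ≠ 0) (hp4 : p4 ≠ 0)
    (hp12 : p1 + p2 ≠ 0) (hp23 : p2 + p3 ≠ 0) (hp34 : p3 + p4 ≠ 0) (hp41 : p4 + p1 ≠ 0)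
    (hp : p1 + p2 + p3 + p4 ≠ 0) (h : p1 * x1 + p2 * x2 + p3 * x3 + p4 * x4 = 0) :
    (x2 = 0 → x3 = 0 → x4 = 0 → x1 = 0) ∧ (x1 = 0 → x3 = 0 → x4 = 0 → x2 = 0) ∧
    (x1 = 0 → x2 = 0 → x4 = 0 → x3 = 0) ∧ (x1 = 0 → x2 = 0 → x3 = 0 → x4 = 0) ∧
    (x3 = 0 → x4 = 0 → x1 = x2 → x1 = 0) ∧ (x1 = 0 → x4 = 0 → x2 = x3 → x2 = 0) ∧
    (x1 = 0 → x2 = 0 → x3 = x4 → x3 = 0) ∧ (x2 = 0 → x3 = 0 → x4 = x1 → x4 = 0) ∧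
    (x1 = x2 → x2 = x3 → x3 = x4 → x4 = 0) := by
  refine ⟨?_, ?_, ?_, ?_, ?_, ?_, ?_, ?_, ?_⟩ <;> rintro e1 e2 e3
  · exact (mul_eq_zero.1 (show p1 * x1 = 0 by simpa [e1, e2, e3] using h)).resolve_left hp1
  · exact (mul_eq_zero.1 (show p2 * x2 = 0 by simpa [e1, e2, e3] using h)).resolve_left hp2
  · exact (mul_eq_zero.1 (show p3 * x3 = 0 by simpa [e1, e2, e3] using h)).resolve_left hp3
  · exact (mul_eq_zero.1 (show p4 * x4 = 0 by simpa [e1, e2, e3] using h)).resolve_left hp4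
  · exact (mul_eq_zero.1 (show (p1 + p2) * x1 = 0 by
      subst e1 e2 e3; linear_combination h)).resolve_left hp12
  · exact (mul_eq_zero.1 (show (p2 + p3) * x2 = 0 by
      subst e1 e2 e3; linear_combination h)).resolve_left hp23
  · exact (mul_eq_zero.1 (show (p3 + p4) * x3 = 0 by
      subst e1 e2 e3; linear_combination h)).resolve_left hp34
  · exact (mul_eq_zero.1 (show (p4 + p1) * x4 = 0 by
      subst e1 e2 e3; linear_combination h)).resolve_left hp41
  · exact (mul_eq_zero.1 (show (p1 + p2 + p3 + p4) * x4 = 0 by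
      subst e1 e2 e3; linear_combination h)).resolve_left hp

lemma core_alg (x1 x2 x3 x4 y1 y2 y3 y4 p1 p2 p3 p4 r1 r2 r3 r4 : ℂ)
    (hp1 : p1 ≠ 0) (hp2 : p2 ≠ 0) (hp3 : p3 ≠ 0) (hp4 : p4 ≠ 0)
    (hp12 : p1 + p2 ≠ 0) (hp23 : p2 + p3 ≠ 0) (hp34 : p3 + p4 ≠ 0) (hp41 : p4 + p1 ≠ 0)
    (hp : p1 + p2 + p3 + p4 ≠ 0)
    (hr1 : r1 ≠ 0) (hr2 : r2 ≠ 0) (hr3 : r3 ≠ 0) (hr4 : r4 ≠ 0)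
    (hr12 : r1 + r2 ≠ 0) (hr23 : r2 + r3 ≠ 0) (hr34 : r3 + r4 ≠ 0) (hr41 : r4 + r1 ≠ 0)
    (hr : r1 + r2 + r3 + r4 ≠ 0)
    (h1 : y1 * (x4 - x1) = 0) (h2 : y2 * (x1 - x2) = 0) (h3 : y3 * (x2 - x3) = 0)
    (h4 : y4 * (x3 - x4) = 0) (h5 : x3 * (y1 - y2) = 0) (h6 : x4 * (y2 - y3) = 0)
    (h7 : x1 * (y3 - y4) = 0) (h8 : x2 * (y4 - y1) = 0)
    (h9 : (p1 * x1 + p2 * x2 + p3 * x3 + p4 * x4) *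
      (r1 * y1 + r2 * y2 + r3 * y3 + r4 * y4) = 0) :
    (x1 = 0 ∧ x2 = 0 ∧ x3 = 0 ∧ x4 = 0) ∨ (y1 = 0 ∧ y2 = 0 ∧ y3 = 0 ∧ y4 = 0) := by
  simp only [mul_eq_zero, sub_eq_zero] at h1 h2 h3 h4 h5 h6 h7 h8
  rcases mul_eq_zero.1 h9 with h9 | h9
  · have W := weight_ne x1 x2 x3 x4 p1 p2 p3 p4 hp1 hp2 hp3 hp4 hp12 hp23 hp34 hp41 hp h9
    clear h9 hp1 hp2 hp3 hp4 hp12 hp23 hp34 hp41 hp hr1 hr2 hr3 hr4 hr12 hr23 hr34 hr41 hr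
    by_cases a1 : x1 = 0 <;> by_cases a2 : x2 = 0 <;> by_cases a3 : x3 = 0 <;>
      by_cases a4 : x4 = 0 <;> grind
  · have W := weight_ne y1 y2 y3 y4 r1 r2 r3 r4 hr1 hr2 hr3 hr4 hr12 hr23 hr34 hr41 hr h9
    clear h9 hp1 hp2 hp3 hp4 hp12 hp23 hp34 hp41 hp hr1 hr2 hr3 hr4 hr12 hr23 hr34 hr41 hr
    by_cases a1 : y1 = 0 <;> by_cases a2 : y2 = 0 <;> by_cases a3 : y3 = 0 <;>
      by_cases a4 : y4 = 0 <;> grind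

lemma cancel_left {k z : ℂ} (hk : k ≠ 0) (h : k * z = 0) : z = 0 :=
  (mul_eq_zero.1 h).resolve_left hk

/-- two-dimensional inner product -/
lemma ip_pv (x y z w x' y' z' w' : Fin 2 → ℂ) :
    ip (pv x y z w) (pv x' y' z' w') =
      (∑ i, (starRingEnd ℂ) (x i) * x' i) * (∑ i, (starRingEnd ℂ) (y i) * y' i) *
      (∑ i, (starRingEnd ℂ) (z i) * z' i) * (∑ i, (starRingEnd ℂ) (w i) * w' i) := by
  simp only [ip, pv, Fintype.sum_prod_type, Fin.sum_univ_two, map_mul]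
  ring

lemma S9_ortho (α β γ δ : ℝ) (i j : Fin 9) :
    ip (S9 α β γ δ i) (S9 α β γ δ j) = if i = j then 1 else 0 := by
  have A : ∀ t : ℝ, (Complex.cos t) * (Complex.cos t) + (Complex.sin t) * (Complex.sin t) = 1 := by
    intro t; rw [← Complex.sin_sq_add_cos_sq t]; ring
  have B : ∀ t : ℝ, (Complex.sin t) * (Complex.sin t) + (Complex.cos t) * (Complex.cos t) = 1 := by
    intro t; rw [← Complex.sin_sq_add_cos_sq t]; ring
  have C : ∀ t : ℝ, (Complex.cos t) * (Complex.sin t) + -((Complex.sin t) * (Complex.cos t)) = 0 := by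
    intro t; ring
  have D : ∀ t : ℝ, (Complex.sin t) * (Complex.cos t) + -((Complex.cos t) * (Complex.sin t)) = 0 := by
    intro t; ring
  fin_cases i <;> fin_cases j <;>
    simp [S9, ip_pv, ket0, ket1, vk, vk', ← Complex.cos_conj, ← Complex.sin_conj, A, B, C, D]

lemma qf_rankOne (s v : Q4 → ℂ) :
    ∑ x, ∑ y, (starRingEnd ℂ) (s x) * (v x * (starRingEnd ℂ) (v y)) * s y =
      ((Complex.normSq (ip s v) : ℝ) : ℂ) := by
  rw [← Complex.mul_conj]
  simp only [ip, map_sum, Finset.sum_mul_sum, map_mul, Complex.conj_conj]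
  refine Finset.sum_congr rfl fun x _ => Finset.sum_congr rfl fun y _ => ?_
  ring

lemma qf_rho (α β γ δ : ℝ) (i : Fin 9) :
    ∑ x, ∑ y, (starRingEnd ℂ) (S9 α β γ δ i x) * rho α β γ δ x y * S9 α β γ δ i y = 0 := by
  set s := S9 α β γ δ i with hs
  have e1 : ∀ x y, (starRingEnd ℂ) (s x) * rho α β γ δ x y * s y =
      (1/7 : ℂ) * ((starRingEnd ℂ) (s x) * (1 : Matrix Q4 Q4 ℂ) x y * s y) -
      (1/7 : ℂ) * ∑ t : Fin 9, (starRingEnd ℂ) (s x) *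
        (S9 α β γ δ t x * (starRingEnd ℂ) (S9 α β γ δ t y)) * s y := by
    intro x y
    simp only [rho, Matrix.smul_apply, Matrix.sub_apply, Matrix.sum_apply, Matrix.of_apply,
      smul_eq_mul]
    rw [← Finset.sum_mul, ← Finset.mul_sum]
    ring
  simp only [e1, Finset.sum_sub_distrib, ← Finset.mul_sum]
  have e2 : ∑ x, ∑ y, ((starRingEnd ℂ) (s x) * (1 : Matrix Q4 Q4 ℂ) x y * s y) = 1 := by
    have := S9_ortho α β γ δ i i
    simp only [if_true] at this
    rw [← this, ip]
    refine Finset.sum_congr rfl fun x _ => ?_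
    rw [Finset.sum_eq_single x]
    · simp [hs]
    · intro b _ hb
      simp [Matrix.one_apply_ne hb.symm]
    · simp
  have e3 : ∑ x, ∑ y, ∑ t : Fin 9, (starRingEnd ℂ) (s x) *
        (S9 α β γ δ t x * (starRingEnd ℂ) (S9 α β γ δ t y)) * s y = 1 := by
    have : ∀ x, ∑ y, ∑ t : Fin 9, (starRingEnd ℂ) (s x) *
        (S9 α β γ δ t x * (starRingEnd ℂ) (S9 α β γ δ t y)) * s y =
        ∑ t : Fin 9, ∑ y, (starRingEnd ℂ) (s x) *
        (S9 α β γ δ t x * (starRingEnd ℂ) (S9 α β γ δ t y)) * s y := fun x => Finset.sum_comm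
    simp only [this]
    rw [Finset.sum_comm]
    simp only [qf_rankOne, hs, S9_ortho]
    rw [Finset.sum_eq_single i]
    · simp
    · intro b _ hb
      simp [hb.symm]
    · simp
  rw [e2, e3]; simp

lemma rho_ne_zero (α β γ δ : ℝ) : rho α β γ δ ≠ 0 := by
  intro h
  have h1 : ∑ x, rho α β γ δ x x = 0 := by simp [h]
  simp only [rho, Matrix.smul_apply, Matrix.sub_apply, Matrix.sum_apply, Matrix.of_apply,
      smul_eq_mul, Matrix.one_apply_eq, ← Finset.mul_sum, Finset.sum_sub_distrib] at h1
  rw [Finset.sum_comm] at h1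
  have : ∀ t : Fin 9, ∑ x, S9 α β γ δ t x * (starRingEnd ℂ) (S9 α β γ δ t x) = 1 := by
    intro t
    have := S9_ortho α β γ δ t t
    simp only [if_true, ip] at this
    rw [← this]
    exact Finset.sum_congr rfl fun x _ => mul_comm _ _
  simp [this] at h1
  norm_num at h1

lemma upb (α β γ δ : ℝ) (hα : α ∈ Set.Ioo 0 (Real.pi / 2))
    (hβ : β ∈ Set.Ioo 0 (Real.pi / 2)) (hγ : γ ∈ Set.Ioo 0 (Real.pi / 2))
    (hδ : δ ∈ Set.Ioo 0 (Real.pi / 2)) (u w : Fin 2 × Fin 2 → ℂ)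
    (h : ∀ i, ip (S9 α β γ δ i) (fun p : Q4 => u (p.1, p.2.1) * w (p.2.2.1, p.2.2.2)) = 0) :
    u = 0 ∨ w = 0 := by
  have cs : ∀ t ∈ Set.Ioo 0 (Real.pi / 2), Complex.cos t ≠ 0 ∧ Complex.sin t ≠ 0 ∧
      Complex.cos t ^ 2 + Complex.sin t ^ 2 = 1 := by
    intro t ht
    refine ⟨?_, ?_, Complex.cos_sq_add_sin_sq _⟩
    · have := Real.cos_pos_of_mem_Ioo ⟨by linarith [ht.1, Real.pi_pos], ht.2⟩
      exact_mod_cast this.ne'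
    · have := Real.sin_pos_of_pos_of_lt_pi ht.1 (by linarith [ht.2, Real.pi_pos])
      exact_mod_cast this.ne'
  obtain ⟨ca0, sa0, ha⟩ := cs α hα
  obtain ⟨cb0, sb0, hb⟩ := cs β hβ
  obtain ⟨cc0, sc0, hc⟩ := cs γ hγ
  obtain ⟨cd0, sd0, hd⟩ := cs δ hδ
  have g0 := h 0
  have g1 := h 1
  have g2 := h 2
  have g3 := h 3
  have g4 := h 4
  have g5 := h 5
  have g6 := h 6
  have g7 := h 7
  have g8 := h 8
  simp [S9, ip, pv, ket0, ket1, vk, vk', Fintype.sum_prod_type, ← Complex.cos_conj,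
    ← Complex.sin_conj] at g0 g1 g2 g3 g4 g5 g6 g7 g8
  clear h cs
  generalize Complex.cos α = ca at *
  generalize Complex.sin α = sa at *
  generalize Complex.cos β = cb at *
  generalize Complex.sin β = sb at *
  generalize Complex.cos γ = cc at *
  generalize Complex.sin γ = sc at *
  generalize Complex.cos δ = cd at *
  generalize Complex.sin δ = sd at *
  obtain ⟨x1, k1⟩ : ∃ x, u (0,0) = sa * sb * x := ⟨u (0,0) / (sa * sb), by field_simp⟩
  obtain ⟨x2, k2⟩ : ∃ x, u (0,1) = -(sa * cb * x) := ⟨-u (0,1) / (sa * cb), by field_simp⟩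
  obtain ⟨x3, k3⟩ : ∃ x, u (1,1) = ca * cb * x := ⟨u (1,1) / (ca * cb), by field_simp⟩
  obtain ⟨x4, k4⟩ : ∃ x, u (1,0) = -(ca * sb * x) := ⟨-u (1,0) / (ca * sb), by field_simp⟩
  obtain ⟨y1, l1⟩ : ∃ x, w (0,0) = sc * sd * x := ⟨w (0,0) / (sc * sd), by field_simp⟩
  obtain ⟨y2, l2⟩ : ∃ x, w (0,1) = -(sc * cd * x) := ⟨-w (0,1) / (sc * cd), by field_simp⟩
  obtain ⟨y3, l3⟩ : ∃ x, w (1,1) = cc * cd * x := ⟨w (1,1) / (cc * cd), by field_simp⟩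
  obtain ⟨y4, l4⟩ : ∃ x, w (1,0) = -(cc * sd * x) := ⟨-w (1,0) / (cc * sd), by field_simp⟩
  simp only [k1, k2, k3, k4, l1, l2, l3, l4] at g0 g1 g2 g3 g4 g5 g6 g7 g8
  have key := core_alg x1 x2 x3 x4 y1 y2 y3 y4
    (sa ^ 2 * sb ^ 2) (sa ^ 2 * cb ^ 2) (ca ^ 2 * cb ^ 2) (ca ^ 2 * sb ^ 2)
    (sc ^ 2 * sd ^ 2) (sc ^ 2 * cd ^ 2) (cc ^ 2 * cd ^ 2) (cc ^ 2 * sd ^ 2)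
    (by positivity) (by positivity) (by positivity) (by positivity)
    (by rw [← mul_add, add_comm, hb]; simpa) (by rw [← add_mul, add_comm, ha]; simpa)
    (by rw [← mul_add, hb]; simpa) (by rw [← add_mul, ha]; simpa)
    (by rw [show sa ^ 2 * sb ^ 2 + sa ^ 2 * cb ^ 2 + ca ^ 2 * cb ^ 2 + ca ^ 2 * sb ^ 2 =
          (ca ^ 2 + sa ^ 2) * (cb ^ 2 + sb ^ 2) by ring, ha, hb]; simp)
    (by positivity) (by positivity) (by positivity) (by positivity)
    (by rw [← mul_add, add_comm, hd]; simpa) (by rw [← add_mul, add_comm, hc]; simpa)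
    (by rw [← mul_add, hd]; simpa) (by rw [← add_mul, hc]; simpa)
    (by rw [show sc ^ 2 * sd ^ 2 + sc ^ 2 * cd ^ 2 + cc ^ 2 * cd ^ 2 + cc ^ 2 * sd ^ 2 =
          (cc ^ 2 + sc ^ 2) * (cd ^ 2 + sd ^ 2) by ring, hc, hd]; simp)
    (by
      refine cancel_left (k := ca * sa * sb * sc * sd) (by positivity) ?_
      linear_combination -g6)
    (by
      refine cancel_left (k := cb * sb * sa * sc * cd) (by positivity) ?_
      linear_combination -g2)
    (by
      refine cancel_left (k := ca * sa * cb * cc * cd) (by positivity) ?_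
      linear_combination -g7)
    (by
      refine cancel_left (k := cb * sb * ca * cc * sd) (by positivity) ?_
      linear_combination -g4)
    (by
      refine cancel_left (k := ca * cb * sc * cd * sd) (by positivity) ?_
      linear_combination g3)
    (by
      refine cancel_left (k := ca * sb * sc * cd * cc) (by positivity) ?_
      linear_combination g5)
    (by
      refine cancel_left (k := sa * sb * cc * cd * sd) (by positivity) ?_
      linear_combination g0)
    (by
      refine cancel_left (k := sa * cb * sc * sd * cc) (by positivity) ?_
      linear_combination g1)
    (by linear_combination g8)
  rcases key with ⟨rfl, rfl, rfl, rfl⟩ | ⟨rfl, rfl, rfl, rfl⟩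
  · left
    ext ⟨i, j⟩
    fin_cases i <;> fin_cases j <;> simp [k1, k2, k3, k4]
  · right
    ext ⟨i, j⟩
    fin_cases i <;> fin_cases j <;> simp [l1, l2, l3, l4]

lemma main_bip (α β γ δ : ℝ) (hα : α ∈ Set.Ioo 0 (Real.pi / 2))
    (hβ : β ∈ Set.Ioo 0 (Real.pi / 2)) (hγ : γ ∈ Set.Ioo 0 (Real.pi / 2))
    (hδ : δ ∈ Set.Ioo 0 (Real.pi / 2)) (n : ℕ) (q : Fin n → ℝ)
    (u w : Fin n → Fin 2 × Fin 2 → ℂ) (hq : ∀ t, 0 ≤ q t)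
    (h : rho α β γ δ =
        ∑ t, (q t : ℂ) • rankOne (fun p : Q4 => u t (p.1, p.2.1) * w t (p.2.2.1, p.2.2.2))) :
    False := by
  apply rho_ne_zero α β γ δ
  rw [h]
  refine Finset.sum_eq_zero fun t _ => ?_
  by_cases hqt : q t = 0
  · simp [hqt]
  have hv : ∀ i, ip (S9 α β γ δ i)
      (fun p : Q4 => u t (p.1, p.2.1) * w t (p.2.2.1, p.2.2.2)) = 0 := by
    intro i
    have e := qf_rho α β γ δ i
    rw [h] at e
    set s := S9 α β γ δ i
    simp only [Matrix.sum_apply, Matrix.smul_apply, smul_eq_mul, Finset.mul_sum,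
      Finset.sum_mul] at e
    have c1 : ∀ x, ∑ y, ∑ t, (starRingEnd ℂ) (s x) * ((q t : ℂ) * rankOne (fun p : Q4 =>
        u t (p.1, p.2.1) * w t (p.2.2.1, p.2.2.2)) x y) * s y =
        ∑ t, ∑ y, (starRingEnd ℂ) (s x) * ((q t : ℂ) * rankOne (fun p : Q4 =>
        u t (p.1, p.2.1) * w t (p.2.2.1, p.2.2.2)) x y) * s y := fun x => Finset.sum_comm
    simp only [c1] at e
    rw [Finset.sum_comm] at e
    have c2 : ∀ t, ∑ x, ∑ y, (starRingEnd ℂ) (s x) * ((q t : ℂ) * rankOne (fun p : Q4 =>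
        u t (p.1, p.2.1) * w t (p.2.2.1, p.2.2.2)) x y) * s y =
        ((q t * Complex.normSq (ip s (fun p : Q4 =>
          u t (p.1, p.2.1) * w t (p.2.2.1, p.2.2.2))) : ℝ) : ℂ) := by
      intro t
      rw [Complex.ofReal_mul, ← qf_rankOne]
      simp only [Finset.mul_sum]
      refine Finset.sum_congr rfl fun x _ => Finset.sum_congr rfl fun y _ => ?_
      simp only [rankOne, Matrix.of_apply]
      ring
    simp only [c2] at e
    rw [← Complex.ofReal_sum, Complex.ofReal_eq_zero,
      Finset.sum_eq_zero_iff_of_nonneg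
        (fun t _ => mul_nonneg (hq t) (Complex.normSq_nonneg _))] at e
    have e' := e t (Finset.mem_univ t)
    exact Complex.normSq_eq_zero.1 ((mul_eq_zero.1 e').resolve_left hqt)
  rcases upb α β γ δ hα hβ hγ hδ _ _ hv with h0 | h0 <;>
  · ext x y
    simp [h0, rankOne]

/-- `ρ` is entangled across the `AB:CD` bipartition: it admits no decomposition as a
nonnegative combination of rank-one projectors onto `AB:CD` product vectors.
Consequently it is also entangled across the `A:B:CD` grouping and as a 4-qubit
state. -/
theorem stmt17 (α β γ δ : ℝ) (hα : α ∈ Set.Ioo 0 (Real.pi / 2))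
    (hβ : β ∈ Set.Ioo 0 (Real.pi / 2)) (hγ : γ ∈ Set.Ioo 0 (Real.pi / 2))
    (hδ : δ ∈ Set.Ioo 0 (Real.pi / 2)) :
    (¬ ∃ (n : ℕ) (q : Fin n → ℝ) (u w : Fin n → Fin 2 × Fin 2 → ℂ),
      (∀ t, 0 ≤ q t) ∧
      rho α β γ δ =
        ∑ t, (q t : ℂ) • rankOne (fun p : Q4 => u t (p.1, p.2.1) * w t (p.2.2.1, p.2.2.2))) ∧
    (¬ ∃ (n : ℕ) (q : Fin n → ℝ) (a b : Fin n → Fin 2 → ℂ) (w : Fin n → Fin 2 × Fin 2 → ℂ),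
      (∀ t, 0 ≤ q t) ∧
      rho α β γ δ =
        ∑ t, (q t : ℂ) • rankOne (fun p : Q4 => a t p.1 * b t p.2.1 * w t (p.2.2.1, p.2.2.2))) ∧
    (¬ ∃ (n : ℕ) (q : Fin n → ℝ) (a b c d : Fin n → Fin 2 → ℂ),
      (∀ t, 0 ≤ q t) ∧
      rho α β γ δ = ∑ t, (q t : ℂ) • rankOne (pv (a t) (b t) (c t) (d t))) := by
  refine ⟨?_, ?_, ?_⟩
  · rintro ⟨n, q, u, w, hq, h⟩
    exact main_bip α β γ δ hα hβ hγ hδ n q u w hq h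
  · rintro ⟨n, q, a, b, w, hq, h⟩
    exact main_bip α β γ δ hα hβ hγ hδ n q (fun t p => a t p.1 * b t p.2) w hq h
  · rintro ⟨n, q, a, b, c, d, hq, h⟩
    refine main_bip α β γ δ hα hβ hγ hδ n q (fun t p => a t p.1 * b t p.2)
      (fun t p => c t p.1 * d t p.2) hq ?_
    rw [h]
    refine Finset.sum_congr rfl fun t _ => ?_
    congr 2
    funext p
    simp only [pv]
    ring
end

section
/- Let α = β = γ = δ = π/4 in the definition of ρ. Then the set of real numbers { Re ⟨ψ, ρ ψ⟩ : ψ = |a₁,a₂,a₃,a₄⟩ with a₁,a₂,a₃,a₄ : Fin 2 → ℂ of norm 1 } has greatest element (3/28)·√(3/2). Equivalently, the geometric measure of entanglement of ρ is G(ρ) = −log₂((3/28)·√(3/2)). -/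
/-- two-variable core -/
theorem G2 (k u c : ℝ) (hk : k ^ 2 = 3 / 2) (hk0 : 0 < k) (hu : 0 ≤ u) (hc : c ≤ 2) :
    0 ≤ 12 * k - 12 * u - 6 * c + 2 * u ^ 3 + 2 * u * c ^ 2 := by
  have hk1 : 6 / 5 ≤ k := by nlinarith
  have hk2 : k ≤ 5 / 4 := by nlinarith
  rcases le_or_gt u (3 / 5) with h | h
  · nlinarith [mul_nonneg hu (sq_nonneg (2 - c)), mul_nonneg (sub_nonneg.2 hc) (sub_nonneg.2 h), pow_nonneg hu 3]
  · have h1 : 0 ≤ (2 * u) * (12 * k - 12 * u - 6 * c + 2 * u ^ 3 + 2 * u * c ^ 2) := by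
      have e : (2 * u) * (12 * k - 12 * u - 6 * c + 2 * u ^ 3 + 2 * u * c ^ 2)
          = (2 * u * c - 3) ^ 2 + 4 * (u - k) ^ 2 * (u ^ 2 + 2 * k * u - k ^ 2)
            + 4 * (k ^ 2 - 3 / 2) * (3 * u ^ 2 - 4 * k * u + k ^ 2+ 3 / 2) + 0 * k := by
        ring_nf
        have h3 : k ^ 3 = 3 / 2 * k := by rw [pow_succ, hk]
        have h44 : k ^ 4 = 9 / 4 := by rw [show k ^ 4 = (k ^ 2) ^ 2 by ring, hk]; norm_num
        simp only [h3, h44, hk]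
        ring
      rw [e, hk]
      have : 0 ≤ u ^ 2 + 2 * k * u - 3 / 2 := by nlinarith
      have := mul_nonneg (sq_nonneg (u - k)) this
      nlinarith [sq_nonneg (2 * u * c - 3)]
    exact nonneg_of_mul_nonneg_right h1 (by linarith)

theorem G3 (k a b c : ℝ) (hk : k ^ 2 = 3 / 2) (hk0 : 0 < k) (ha : 0 ≤ a) (hb : 0 ≤ b)
    (hc : c ≤ 2) (hac : a ≤ c) (hbc : b ≤ c) :
    0 ≤ 12 * k - 6 * (a + b + c) + (a + b + c) * (a * b + a * c + b * c) - 5 * (a * b * c) := by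
  have h := G2 k ((a + b) / 2) c hk hk0 (by linarith) hc
  nlinarith [mul_nonneg (sq_nonneg (a - b)) (show 0 ≤ 4 * c - (a + b) by linarith)]

theorem G (k a b c : ℝ) (hk : k ^ 2 = 3 / 2) (hk0 : 0 < k) (ha : 0 ≤ a) (hb : 0 ≤ b) (hc : 0 ≤ c)
    (ha2 : a ≤ 2) (hb2 : b ≤ 2) (hc2 : c ≤ 2) :
    0 ≤ 12 * k - 6 * (a + b + c) + (a + b + c) * (a * b + a * c + b * c) - 5 * (a * b * c) := by
  rcases le_total a c with h | h
  · rcases le_total b c with hh | hh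
    · exact G3 k a b c hk hk0 ha hb hc2 h hh
    · have := G3 k a c b hk hk0 ha hc hb2 (by linarith) hh
      linarith
  · rcases le_total b a with hh | hh
    · have := G3 k b c a hk hk0 hb hc ha2 hh h
      linarith
    · have := G3 k a c b hk hk0 ha hc hb2 (by linarith) (by linarith)
      linarith

theorem H1 (k w s : ℝ) (hk : 6 / 5 ≤ k) (hw : 0 ≤ w) (h1 : 2 * w ≤ s) (h2 : s ≤ 2 + w) (hw2 : w ≤ 2) :
    0 ≤ 12 * k - 6 * (w + s) + (w + s) * (w * s + w * (s - w)) - 5 * (w * (w * (s - w)))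
      + w * (-6 + 6 * (w + s) + 6 * w - 2 * (w + s) ^ 2 + 2 * (w * s + w * (s - w)) + w * (w * (s - w))) := by
  have hA : 0 ≤ 12 * k - 24 * w + 24 * w ^ 2 - 8 * w ^ 3 + w ^ 4 := by
    nlinarith [sq_nonneg ((w - 2) ^ 2 - 3 / 2), sq_nonneg (w - 2 + 4 / 3)]
  have hB : 0 ≤ 12 * k - 6 * (w + (2 + w)) + (w + (2 + w)) * (w * (2 + w) + w * ((2 + w) - w)) - 5 * (w * (w * ((2 + w) - w)))
      + w * (-6 + 6 * (w + (2 + w)) + 6 * w - 2 * (w + (2 + w)) ^ 2 + 2 * (w * (2 + w) + w * ((2 + w) - w)) + w * (w * ((2 + w) - w))) := by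
    ring_nf
    nlinarith [mul_nonneg hw (sq_nonneg (w - 1 / 3)), mul_nonneg hw (sq_nonneg (w - 1)), mul_nonneg hw (sub_nonneg.2 hw2), sq_nonneg (w - 1 / 3), mul_nonneg (mul_nonneg hw hw) (sub_nonneg.2 hw2), mul_nonneg (sub_nonneg.2 hw2) (sq_nonneg (w - 1 / 3))]
  have h3 := mul_nonneg (sub_nonneg.2 h2) hA
  have h4 := mul_nonneg (sub_nonneg.2 h1) hB
  rcases hw2.eq_or_lt with h0 | h0
  · subst h0
    have : s = 4 := by linarith
    subst this
    linarith
  · refine nonneg_of_mul_nonneg_right (a := 2 - w) ?_ (by linarith)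
    linarith

theorem H2 (k w s : ℝ) (hk : 6 / 5 ≤ k) (hw : 0 ≤ w) (h1 : 2 + w ≤ s) (h2 : s ≤ 4)  :
    0 ≤ 12 * k - 6 * (w + s) + (w + s) * (w * s + (2 * s - 4)) - 5 * (w * (2 * s - 4))
      + w * (-6 + 6 * (w + s) + 6 * w - 2 * (w + s) ^ 2 + 2 * (w * s + (2 * s - 4)) + w * (2 * s - 4)) := by
  have hw2 : w ≤ 2 := by linarith
  have hA : 0 ≤ 1275 / 1000 - 39 / 16 * w + 13 / 2 * w ^ 2 - w ^ 3 := by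
    nlinarith [sq_nonneg (w - 1 / 4), mul_nonneg (mul_nonneg hw hw) (sub_nonneg.2 hw2)]
  have hB : 0 ≤ 3275 / 1000 - 167 / 16 * w + 12 * w ^ 2 - 2 * w ^ 3 := by
    nlinarith [sq_nonneg (w - 5 / 8), mul_nonneg (mul_nonneg hw hw) (sub_nonneg.2 hw2), mul_nonneg hw (sq_nonneg (w - 1 / 2)),
      mul_nonneg (sub_nonneg.2 hw2) (sq_nonneg (w - 1 / 2))]
  have h3 := mul_nonneg (sub_nonneg.2 h2) hA
  have h4 := mul_nonneg (sub_nonneg.2 h1) hB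
  rcases hw2.eq_or_lt with h0 | h0
  · subst h0
    have : s = 4 := by linarith
    subst this
    linarith
  · have h5 := mul_nonneg (mul_nonneg (sub_nonneg.2 hw2) (sub_nonneg.2 hw2)) (sq_nonneg (s - 11 / 4))
    have h6 := mul_nonneg (sub_nonneg.2 hw2) (sub_nonneg.2 hk)
    refine nonneg_of_mul_nonneg_right (a := 2 - w) ?_ (by linarith)
    linarith

theorem H (k w b c : ℝ) (hk : 6 / 5 ≤ k) (hw : 0 ≤ w) (hb : w ≤ b) (hc : w ≤ c)
    (hb2 : b ≤ 2) (hc2 : c ≤ 2) :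
    0 ≤ 12 * k - 6 * (w + b + c) + (w + b + c) * (w * b + w * c + b * c) - 5 * (w * b * c)
      + w * (-6 + 6 * (w + b + c) + 6 * w - 2 * (w + b + c) ^ 2 + 2 * (w * b + w * c + b * c) + w * b * c) := by
  have hco : 0 ≤ b + c - 2 * w + w ^ 2 := by nlinarith
  rcases le_total (b + c) (2 + w) with h | h
  · have := H1 k w (b + c) hk hw (by linarith) h (by linarith)
    nlinarith [mul_nonneg hco (mul_nonneg (sub_nonneg.2 hb) (sub_nonneg.2 hc))]
  · have := H2 k w (b + c) hk hw h (by linarith)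
    nlinarith [mul_nonneg hco (mul_nonneg (sub_nonneg.2 hb2) (sub_nonneg.2 hc2))]

theorem main1 (k x z1 p z2 q z3 r z4 : ℝ) (hk : k ^ 2 = 3 / 2) (hk0 : 0 < k)
    (d1 : x ^ 2 + z1 ^ 2 ≤ 1) (d2 : p ^ 2 + z2 ^ 2 ≤ 1) (d3 : q ^ 2 + z3 ^ 2 ≤ 1)
    (d4 : r ^ 2 + z4 ^ 2 ≤ 1) (xp : x ≤ p) (pq : p ≤ q) (pr : p ≤ r) :
    16 - 12 * k ≤ 8 + 2 * (x + p + q + r) + 2 * (z1 * z2 * (r - q) + z1 * z3 * (p - r)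
      + z1 * z4 * (q - p) + z2 * z3 * (x - r) + z2 * z4 * (x - q) + z3 * z4 * (x - p))
      + (1 - x) * (1 - p) * (1 - q) * (1 - r) := by
  have x1 : -1 ≤ x := by nlinarith [sq_nonneg z1]
  have p1 : p ≤ 1 := by nlinarith [sq_nonneg z2]
  have q1 : q ≤ 1 := by nlinarith [sq_nonneg z3]
  have r1 : r ≤ 1 := by nlinarith [sq_nonneg z4]
  have hk1 : 6 / 5 ≤ k := by nlinarith
  have g := G k (1 + p) (1 + q) (1 + r) hk hk0 (by linarith) (by linarith) (by linarith)
    (by linarith) (by linarith) (by linarith)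
  have h := H k (1 + p) (1 + q) (1 + r) hk1 (by linarith) (by linarith) (by linarith)
    (by linarith) (by linarith)
  -- lower bound
  have hL : 8 + 2 * (x + p + q + r) - ((r - x) * (2 - p ^ 2 - q ^ 2) + (q - x) * (2 - p ^ 2 - r ^ 2)
      + (p - x) * (2 - q ^ 2 - r ^ 2)) - (1 - x ^ 2) * (q + r - 2 * p)
      + (1 - x) * (1 - p) * (1 - q) * (1 - r) ≤
      8 + 2 * (x + p + q + r) + 2 * (z1 * z2 * (r - q) + z1 * z3 * (p - r)
      + z1 * z4 * (q - p) + z2 * z3 * (x - r) + z2 * z4 * (x - q) + z3 * z4 * (x - p))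
      + (1 - x) * (1 - p) * (1 - q) * (1 - r) := by
    have a1 := mul_nonneg (show 0 ≤ (r - x) + (q - x) by linarith) (sub_nonneg.2 d2)
    have a2 := mul_nonneg (show 0 ≤ (r - x) + (p - x) by linarith) (sub_nonneg.2 d3)
    have a3 := mul_nonneg (show 0 ≤ (q - x) + (p - x) by linarith) (sub_nonneg.2 d4)
    have a4 := mul_nonneg (show 0 ≤ q + r - 2 * p by linarith) (sub_nonneg.2 d1)
    have b1 := mul_nonneg (show 0 ≤ r - p by linarith) (sq_nonneg (z2 - z3 + z1))
    have b2 := mul_nonneg (show 0 ≤ q - p by linarith) (sq_nonneg (z4 - z2 + z1))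
    have b3 := mul_nonneg (show 0 ≤ p - x by linarith)
      (add_nonneg (add_nonneg (sq_nonneg (z2 - z3)) (sq_nonneg (z4 - z2))) (sq_nonneg (z3 - z4)))
    linarith
  refine le_trans ?_ hL
  -- convexity in x
  have e1 := mul_nonneg (show 0 ≤ p - x by linarith) g
  have e2 := mul_nonneg (show 0 ≤ 1 + x by linarith) h
  have e3 := mul_nonneg (sq_nonneg (1 + x)) (show 0 ≤ q + r - 2 * p by linarith)
  rcases (show 0 ≤ 1 + p by linarith).eq_or_lt with h0 | h0
  · have : x = -1 := by linarith
    subst this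
    linarith
  · have e4 : 0 ≤ (1 + p) * ((8 + 2 * (x + p + q + r) - ((r - x) * (2 - p ^ 2 - q ^ 2) + (q - x) * (2 - p ^ 2 - r ^ 2)
      + (p - x) * (2 - q ^ 2 - r ^ 2)) - (1 - x ^ 2) * (q + r - 2 * p)
      + (1 - x) * (1 - p) * (1 - q) * (1 - r)) - (16 - 12 * k)) := by
      have e5 := mul_nonneg h0.le e3
      linarith
    have := nonneg_of_mul_nonneg_right e4 h0
    linarith

theorem ip_pv_s18 (a b c d aa bb cc dd : Fin 2 → ℂ) :
    ip (pv a b c d) (pv aa bb cc dd) =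
      (∑ i, (starRingEnd ℂ) (a i) * aa i) * (∑ i, (starRingEnd ℂ) (b i) * bb i) *
      (∑ i, (starRingEnd ℂ) (c i) * cc i) * (∑ i, (starRingEnd ℂ) (d i) * dd i) := by
  simp only [ip, pv, Fintype.sum_prod_type, Fin.sum_univ_two, map_mul]
  ring

theorem ip_rho_s18 (α β γ δ : ℝ) (v : Q4 → ℂ) :
    (ip v ((rho α β γ δ).mulVec v)).re =
      1 / 7 * ((ip v v).re - ∑ t, Complex.normSq (ip (S9 α β γ δ t) v)) := by
  have key : ip v ((rho α β γ δ).mulVec v) =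
      (1 / 7 : ℂ) * (ip v v - ∑ t, (Complex.normSq (ip (S9 α β γ δ t) v) : ℂ)) := by
    have h1 : (rho α β γ δ).mulVec v =
        (1 / 7 : ℂ) • (v - ∑ t, ip (S9 α β γ δ t) v • S9 α β γ δ t) := by
      unfold rho
      rw [Matrix.smul_mulVec, Matrix.sub_mulVec, Matrix.one_mulVec, Matrix.sum_mulVec]
      congr 2
      refine Finset.sum_congr rfl fun t _ => ?_
      funext x
      simp only [Matrix.mulVec, dotProduct, Matrix.of_apply, Pi.smul_apply, smul_eq_mul, ip,
        Finset.sum_mul]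
      refine Finset.sum_congr rfl fun y _ => ?_
      ring
    rw [h1]
    have h2 : ∀ t, (Complex.normSq (ip (S9 α β γ δ t) v) : ℂ) =
        ip (S9 α β γ δ t) v * ∑ x, (starRingEnd ℂ) (v x) * S9 α β γ δ t x := by
      intro t
      rw [← Complex.mul_conj]
      congr 1
      simp only [ip, map_sum, map_mul, Complex.conj_conj]
      refine Finset.sum_congr rfl fun y _ => ?_
      ring
    simp only [h2]
    simp only [ip, Pi.smul_apply, Pi.sub_apply, Finset.sum_apply, smul_eq_mul, mul_sub,
      Finset.sum_sub_distrib, Finset.mul_sum]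
    congr 1
    · exact Finset.sum_congr rfl fun y _ => by ring
    · rw [Finset.sum_comm]
      refine Finset.sum_congr rfl fun y _ => Finset.sum_congr rfl fun t _ => ?_
      simp only [Finset.sum_mul, Finset.mul_sum]
      exact Finset.sum_congr rfl fun t _ => by ring
  rw [key, show (1 / 7 : ℂ) = ((1 / 7 : ℝ) : ℂ) by push_cast; rfl, Complex.re_ofReal_mul,
    Complex.sub_re, ← Complex.ofReal_sum, Complex.ofReal_re]

/-- Bloch coordinates -/
noncomputable def bx (a : Fin 2 → ℂ) : ℝ := 2 * ((a 0).re * (a 1).re + (a 0).im * (a 1).im)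
noncomputable def bz (a : Fin 2 → ℂ) : ℝ := Complex.normSq (a 0) - Complex.normSq (a 1)

theorem b_disk (a : Fin 2 → ℂ) (h : (∑ i, Complex.normSq (a i)) = 1) :
    bx a ^ 2 + bz a ^ 2 ≤ 1 := by
  rw [Fin.sum_univ_two] at h
  have : (1 : ℝ) = (Complex.normSq (a 0) + Complex.normSq (a 1)) ^ 2 := by rw [h]; norm_num
  rw [this]
  simp only [bx, bz, Complex.normSq_apply]
  nlinarith [sq_nonneg ((a 0).re * (a 1).im - (a 0).im * (a 1).re)]

theorem b_self (a : Fin 2 → ℂ) (h : (∑ i, Complex.normSq (a i)) = 1) :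
    (∑ i, (starRingEnd ℂ) (a i) * a i) = 1 := by
  simp only [← Complex.normSq_eq_conj_mul_self]
  exact_mod_cast h

theorem b0 (a : Fin 2 → ℂ) (h : (∑ i, Complex.normSq (a i)) = 1) :
    Complex.normSq (∑ i, (starRingEnd ℂ) (ket0 i) * a i) = (1 + bz a) / 2 := by
  rw [Fin.sum_univ_two] at h ⊢
  simp [ket0, bz]
  linarith

theorem b1 (a : Fin 2 → ℂ) (h : (∑ i, Complex.normSq (a i)) = 1) :
    Complex.normSq (∑ i, (starRingEnd ℂ) (ket1 i) * a i) = (1 - bz a) / 2 := by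
  rw [Fin.sum_univ_two] at h ⊢
  simp [ket1, bz]
  linarith

theorem bp (a : Fin 2 → ℂ) (h : (∑ i, Complex.normSq (a i)) = 1) :
    Complex.normSq (∑ i, (starRingEnd ℂ) (vk (Real.pi / 4) i) * a i) = (1 + bx a) / 2 := by
  rw [Fin.sum_univ_two] at h ⊢
  have h2 : √2 ^ 2 = (2 : ℝ) := Real.sq_sqrt (by norm_num)
  simp only [vk, bx, Real.cos_pi_div_four, Real.sin_pi_div_four, Matrix.cons_val_zero,
    Matrix.cons_val_one, Complex.conj_ofReal, Complex.normSq_apply, Complex.add_re, Complex.add_im,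
    Complex.re_ofReal_mul, Complex.im_ofReal_mul] at h ⊢
  rw [← h]
  linear_combination (1 / 4) * (((a 0).re + (a 1).re) ^ 2 + ((a 0).im + (a 1).im) ^ 2) * h2

theorem bm (a : Fin 2 → ℂ) (h : (∑ i, Complex.normSq (a i)) = 1) :
    Complex.normSq (∑ i, (starRingEnd ℂ) (vk' (Real.pi / 4) i) * a i) = (1 - bx a) / 2 := by
  rw [Fin.sum_univ_two] at h ⊢
  have h2 : √2 ^ 2 = (2 : ℝ) := Real.sq_sqrt (by norm_num)
  simp only [vk', bx, Real.cos_pi_div_four, Real.sin_pi_div_four, Matrix.cons_val_zero,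
    Matrix.cons_val_one, map_neg, Complex.conj_ofReal, Complex.normSq_apply, Complex.add_re,
    Complex.add_im, neg_mul, Complex.neg_re, Complex.neg_im,
    Complex.re_ofReal_mul, Complex.im_ofReal_mul] at h ⊢
  rw [← h]
  linear_combination (1 / 4) * (((a 0).re - (a 1).re) ^ 2 + ((a 0).im - (a 1).im) ^ 2) * h2

/-- The objective in Bloch coordinates. -/
noncomputable def FF (x z1 p z2 q z3 r z4 : ℝ) : ℝ :=
  8 + 2 * (x + p + q + r) + 2 * (z1 * z2 * (r - q) + z1 * z3 * (p - r)
      + z1 * z4 * (q - p) + z2 * z3 * (x - r) + z2 * z4 * (x - q) + z3 * z4 * (x - p))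
      + (1 - x) * (1 - p) * (1 - q) * (1 - r)

theorem val (a b c d : Fin 2 → ℂ) (ha : (∑ i, Complex.normSq (a i)) = 1)
    (hb : (∑ i, Complex.normSq (b i)) = 1) (hc : (∑ i, Complex.normSq (c i)) = 1)
    (hd : (∑ i, Complex.normSq (d i)) = 1) :
    (ip (pv a b c d) ((rho (Real.pi / 4) (Real.pi / 4) (Real.pi / 4) (Real.pi / 4)).mulVec
      (pv a b c d))).re =
      1 / 7 * (1 - FF (bx a) (bz a) (bx b) (bz b) (bx c) (bz c) (bx d) (bz d) / 16) := by
  rw [ip_rho_s18, ip_pv_s18, b_self a ha, b_self b hb, b_self c hc, b_self d hd]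
  congr 2
  · simp
  · rw [show (∑ t, Complex.normSq (ip (S9 (Real.pi / 4) (Real.pi / 4) (Real.pi / 4) (Real.pi / 4) t)
        (pv a b c d))) =
        Complex.normSq (ip (pv ket0 ket0 ket1 (vk (Real.pi / 4))) (pv a b c d)) +
        Complex.normSq (ip (pv ket0 ket1 (vk (Real.pi / 4)) ket0) (pv a b c d)) +
        Complex.normSq (ip (pv ket0 (vk (Real.pi / 4)) ket0 ket1) (pv a b c d)) +
        Complex.normSq (ip (pv ket1 ket1 ket0 (vk (Real.pi / 4))) (pv a b c d)) +
        Complex.normSq (ip (pv ket1 (vk (Real.pi / 4)) ket1 ket0) (pv a b c d)) +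
        Complex.normSq (ip (pv ket1 ket0 (vk (Real.pi / 4)) ket1) (pv a b c d)) +
        Complex.normSq (ip (pv (vk (Real.pi / 4)) ket0 ket0 ket0) (pv a b c d)) +
        Complex.normSq (ip (pv (vk (Real.pi / 4)) ket1 ket1 ket1) (pv a b c d)) +
        Complex.normSq (ip (pv (vk' (Real.pi / 4)) (vk' (Real.pi / 4)) (vk' (Real.pi / 4))
          (vk' (Real.pi / 4))) (pv a b c d)) by
      simp only [Fin.sum_univ_succ, Finset.univ_eq_empty, Finset.sum_empty, S9, add_zero]
      simp only [Matrix.cons_val_zero, Matrix.cons_val_succ]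
      simp only [add_assoc]]
    simp only [ip_pv_s18, map_mul, b0 a ha, b0 b hb, b0 c hc, b0 d hd, b1 a ha, b1 b hb, b1 c hc,
      b1 d hd, bp a ha, bp b hb, bp c hc, bp d hd, bm a ha, bm b hb, bm c hc, bm d hd, FF]
    ring

theorem main2 (k x z1 p z2 q z3 r z4 : ℝ) (hk : k ^ 2 = 3 / 2) (hk0 : 0 < k)
    (d1 : x ^ 2 + z1 ^ 2 ≤ 1) (d2 : p ^ 2 + z2 ^ 2 ≤ 1) (d3 : q ^ 2 + z3 ^ 2 ≤ 1)
    (d4 : r ^ 2 + z4 ^ 2 ≤ 1) (xp : x ≤ p) (xq : x ≤ q) (xr : x ≤ r) :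
    16 - 12 * k ≤ FF x z1 p z2 q z3 r z4 := by
  have step : (p ≤ q ∧ p ≤ r) ∨ (q ≤ r ∧ q ≤ p) ∨ (r ≤ p ∧ r ≤ q) := by
    rcases le_total p q with h | h <;> rcases le_total q r with hh | hh <;>
      rcases le_total p r with hhh | hhh <;> grind
  unfold FF
  rcases step with ⟨h, hh⟩ | ⟨h, hh⟩ | ⟨h, hh⟩
  · exact main1 k x z1 p z2 q z3 r z4 hk hk0 d1 d2 d3 d4 xp h hh
  · have := main1 k x z1 q z3 r z4 p z2 hk hk0 d1 d3 d4 d2 xq h hh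
    linarith
  · have := main1 k x z1 r z4 p z2 q z3 hk hk0 d1 d4 d2 d3 xr h hh
    linarith

theorem main3 (k x z1 p z2 q z3 r z4 : ℝ) (hk : k ^ 2 = 3 / 2) (hk0 : 0 < k)
    (d1 : x ^ 2 + z1 ^ 2 ≤ 1) (d2 : p ^ 2 + z2 ^ 2 ≤ 1) (d3 : q ^ 2 + z3 ^ 2 ≤ 1)
    (d4 : r ^ 2 + z4 ^ 2 ≤ 1) :
    16 - 12 * k ≤ FF x z1 p z2 q z3 r z4 := by
  have step : (x ≤ p ∧ x ≤ q ∧ x ≤ r) ∨ (p ≤ x ∧ p ≤ q ∧ p ≤ r) ∨ (q ≤ p ∧ q ≤ x ∧ q ≤ r) ∨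
      (r ≤ p ∧ r ≤ q ∧ r ≤ x) := by
    by_contra hcon
    push Not at hcon
    obtain ⟨h1, h2, h3, h4⟩ := hcon
    rcases le_total x p with a | a <;> rcases le_total x q with b | b <;>
      rcases le_total x r with c | c <;> rcases le_total p q with d | d <;>
      rcases le_total p r with e | e <;> rcases le_total q r with f | f <;>
      grind
  rcases step with ⟨h, hh, hhh⟩ | ⟨h, hh, hhh⟩ | ⟨h, hh, hhh⟩ | ⟨h, hh, hhh⟩
  · exact main2 k x z1 p z2 q z3 r z4 hk hk0 d1 d2 d3 d4 h hh hhh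
  · have := main2 k p z2 x z1 q z3 r (-z4) hk hk0 d2 d1 d3 (by simpa using d4) h hh hhh
    unfold FF at this ⊢
    linarith
  · have := main2 k q z3 p (-z2) x z1 r z4 hk hk0 d3 (by simpa using d2) d1 d4 h hh hhh
    unfold FF at this ⊢
    linarith
  · have := main2 k r z4 p z2 q (-z3) x z1 hk hk0 d4 d2 (by simpa using d3) d1 h hh hhh
    unfold FF at this ⊢
    linarith

/-- A real qubit with prescribed Bloch coordinates. -/
theorem exists_bloch (x z : ℝ) (h : x ^ 2 + z ^ 2 = 1) :
    ∃ a : Fin 2 → ℂ, (∑ i, Complex.normSq (a i)) = 1 ∧ bx a = x ∧ bz a = z := by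
  have hz : z ≤ 1 := by nlinarith [sq_nonneg x]
  have hzl : -1 ≤ z := by nlinarith [sq_nonneg x]
  rcases hzl.eq_or_lt with h0 | h0
  · refine ⟨![0, 1], by simp, ?_, by simp [bz, h0]⟩
    subst h0
    have : x = 0 := by nlinarith
    simp [bx, this]
  · have hs : 0 < √((1 + z) / 2) := Real.sqrt_pos.2 (by linarith)
    have hs2 : √((1 + z) / 2) ^ 2 = (1 + z) / 2 := Real.sq_sqrt (by linarith)
    set s := √((1 + z) / 2)
    have hne : s ≠ 0 := hs.ne'
    have hq : (x / (2 * s)) * (x / (2 * s)) = (1 - z) / 2 := by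
      rw [div_mul_div_comm, div_eq_iff (by positivity)]
      linear_combination h - 2 * (1 - z) * hs2
    refine ⟨![(s : ℂ), ((x / (2 * s) : ℝ) : ℂ)], ?_, ?_, ?_⟩
    · simp only [Fin.sum_univ_two, Matrix.cons_val_zero, Matrix.cons_val_one,
        Complex.normSq_ofReal, hq]
      linear_combination hs2
    · simp only [bx, Matrix.cons_val_zero, Matrix.cons_val_one, Complex.ofReal_re,
        Complex.ofReal_im]
      field_simp
      ring
    · simp only [bz, Matrix.cons_val_zero, Matrix.cons_val_one, Complex.normSq_ofReal, hq]
      linear_combination hs2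

/-- For `α = β = γ = δ = π/4`, the set of values `⟨ψ, ρ ψ⟩` over normalized 4-qubit
product vectors `ψ = |a₁,a₂,a₃,a₄⟩` has greatest element `(3/28)·√(3/2)`;
equivalently, the geometric measure of entanglement of `ρ` is
`G(ρ) = −log₂((3/28)·√(3/2))`. -/
theorem stmt18 :
    IsGreatest
      {r : ℝ | ∃ a1 a2 a3 a4 : Fin 2 → ℂ,
        (∑ i, Complex.normSq (a1 i)) = 1 ∧ (∑ i, Complex.normSq (a2 i)) = 1 ∧
        (∑ i, Complex.normSq (a3 i)) = 1 ∧ (∑ i, Complex.normSq (a4 i)) = 1 ∧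
        r = (ip (pv a1 a2 a3 a4)
              ((rho (Real.pi / 4) (Real.pi / 4) (Real.pi / 4) (Real.pi / 4)).mulVec
                (pv a1 a2 a3 a4))).re}
      ((3 / 28) * Real.sqrt (3 / 2)) := by
  have hk : √(3 / 2) ^ 2 = (3 / 2 : ℝ) := Real.sq_sqrt (by norm_num)
  have hk0 : 0 < √(3 / 2 : ℝ) := Real.sqrt_pos.2 (by norm_num)
  set k := √(3 / 2 : ℝ)
  constructor
  · have hk1 : 1 ≤ k := by nlinarith
    have hz : 0 ≤ 2 * k - 3 / 2 := by linarith
    have hzz : √(2 * k - 3 / 2) ^ 2 = 2 * k - 3 / 2 := Real.sq_sqrt hz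
    set z := √(2 * k - 3 / 2)
    obtain ⟨a, ha, hax, haz⟩ := exists_bloch (-1) 0 (by norm_num)
    obtain ⟨b, hb, hbx, hbz⟩ := exists_bloch (k - 1) z (by rw [hzz]; linear_combination hk)
    refine ⟨a, b, b, b, ha, hb, hb, hb, ?_⟩
    rw [val a b b b ha hb hb hb, hax, haz, hbx, hbz]
    unfold FF
    linear_combination (-3 / 56 * k) * hzz + (-1 / 56 * k) * hk
  · rintro r ⟨a, b, c, d, ha, hb, hc, hd, rfl⟩
    rw [val a b c d ha hb hc hd]
    have := main3 k (bx a) (bz a) (bx b) (bz b) (bx c) (bz c) (bx d) (bz d) hk hk0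
      (b_disk a ha) (b_disk b hb) (b_disk c hc) (b_disk d hd)
    linarith
end
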